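/- arXiv:2409.06849 — 3 statements merged into one kernel-verified Lean document; each statement's English description precedes it below -/
import Mathlib

section
/- For every integer d ≥ 3, the asymptotic critical exponent is preserved by the projection π : i ↦ a b^i, i.e., E*(π(u_d)) = E*(u_d), where u_d is the fixed point of φ_d. -/
namespace RichRT

variable {A : Type*}

/-- The word `w` occurs in the sequence `u` at position `j`. -/
def OccursAt (w : List A) (u : ℕ → A) (j : ℕ) : Prop :=
  w = (List.range w.length).map fun t => u (j + t)

/-- `w` is a factor of the infinite sequence `u`. -/
def IsFactorS (w : List A) (u : ℕ → A) : Prop :=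
  ∃ j : ℕ, OccursAt w u j

/-- `u` is recurrent: every factor occurs infinitely often. -/
def Recurrent (u : ℕ → A) : Prop :=
  ∀ w : List A, IsFactorS w u → ∀ N : ℕ, ∃ j, N ≤ j ∧ OccursAt w u j

/-- The number of distinct palindromic factors of a finite word. -/
noncomputable def palCount (w : List A) : ℕ :=
  Set.ncard {p : List A | p <:+: w ∧ p.reverse = p}

/-- A finite word of length `n` is rich if it has exactly `n+1` palindromic factors. -/
def RichWord (w : List A) : Prop := palCount w = w.length + 1

/-- A sequence is rich if all its factors are rich. -/
def RichSeq (u : ℕ → A) : Prop := ∀ w : List A, IsFactorS w u → RichWord w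

/-- The prefix of length `k` of the periodic sequence `vvv⋯`. -/
def powPref (v : List A) (k : ℕ) : List A := ((List.replicate k v).flatten).take k

/-- The set of exponents `k/|v|` of fractional powers `v^(k/|v|)` occurring in `u`,
with `|v| ≥ n`. -/
def expSet (u : ℕ → A) (n : ℕ) : Set ℝ :=
  {x | ∃ (v : List A) (k : ℕ), v ≠ [] ∧ n ≤ v.length ∧
    IsFactorS (powPref v k) u ∧ x = (k : ℝ) / (v.length : ℝ)}

/-- The critical exponent of a sequence, with values in `EReal`. -/
noncomputable def critExp (u : ℕ → A) : EReal :=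
  sSup ((fun x : ℝ => (x : EReal)) '' expSet u 0)

/-- The asymptotic critical exponent of a sequence: `⊤` if the critical exponent is `⊤`,
otherwise the limit (= infimum, by monotonicity) over `n` of the suprema of exponents of
powers `v^e` with `|v| ≥ n`. -/
noncomputable def acritExp (u : ℕ → A) : EReal :=
  if critExp u = ⊤ then ⊤
  else ⨅ n : ℕ, sSup ((fun x : ℝ => (x : EReal)) '' expSet u n)

/-- The morphism `φ_d` on letters: `i ↦ 0(i+1)` for `i < d-1`, `d-1 ↦ 0(d-1)(d-1)`. -/
def phiL (d : ℕ) (i : ℕ) : List ℕ :=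
  if i < d - 1 then [0, i + 1] else [0, d - 1, d - 1]

/-- The morphism `φ_d` on words. -/
def phiW (d : ℕ) (w : List ℕ) : List ℕ := w.flatMap (phiL d)

/-- `u` is the fixed point of `φ_d`: it begins with `0` and `φ_d(u) = u`, i.e. the image
of every prefix of `u` is again a prefix of `u`. -/
def IsPhiFixed (d : ℕ) (u : ℕ → ℕ) : Prop :=
  u 0 = 0 ∧ ∀ m : ℕ, OccursAt (phiW d ((List.range m).map u)) u 0

/-- Left extensions of `w` in `u`. -/
def Lext (u : ℕ → ℕ) (w : List ℕ) : Set (List ℕ) :=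
  {x | ∃ i : ℕ, x = i :: w ∧ IsFactorS x u}

/-- Right extensions of `w` in `u`. -/
def Rext (u : ℕ → ℕ) (w : List ℕ) : Set (List ℕ) :=
  {x | ∃ i : ℕ, x = w ++ [i] ∧ IsFactorS x u}

/-- Both-sided extensions of `w` in `u`. -/
def Bext (u : ℕ → ℕ) (w : List ℕ) : Set (List ℕ) :=
  {x | ∃ i j : ℕ, x = i :: (w ++ [j]) ∧ IsFactorS x u}

/-- `w` is a bispecial factor of `u`. -/
def Bispecial (u : ℕ → ℕ) (w : List ℕ) : Prop :=
  IsFactorS w u ∧ 2 ≤ (Lext u w).ncard ∧ 2 ≤ (Rext u w).ncard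

/-- The bilateral order `b(w) = #Bext(w) − #Lext(w) − #Rext(w) + 1`. -/
noncomputable def bord (u : ℕ → ℕ) (w : List ℕ) : ℤ :=
  ((Bext u w).ncard : ℤ) - ((Lext u w).ncard : ℤ) - ((Rext u w).ncard : ℤ) + 1

/-- The palindromes `F_0 = ε`, `F_i = φ(F_{i-1})0`. -/
def Fword (d : ℕ) : ℕ → List ℕ
  | 0 => []
  | i + 1 => phiW d (Fword d i) ++ [0]

/-- Membership in the set `𝒯` of bispecial triplets. -/
def TripleMem (d : ℕ) (u : ℕ → ℕ) (t : ℕ × List ℕ × ℕ) : Prop :=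
  Bispecial u t.2.1 ∧ t.1 < d - 1 ∧ t.2.2 < d - 1 ∧
    IsFactorS (t.1 :: t.2.1) u ∧ IsFactorS (t.2.1 ++ [t.2.2]) u

/-- The map `f` on triplets. -/
def fmap (d : ℕ) (t : ℕ × List ℕ × ℕ) : ℕ × List ℕ × ℕ :=
  ((t.1 + 1) % (d - 1),
   (if t.1 = d - 2 then [d - 1] else []) ++ phiW d t.2.1 ++ [0] ++
     (if t.2.2 = d - 2 then [d - 1] else []),
   (t.2.2 + 1) % (d - 1))

/-- The initial triplets `T_k = (0, ε, k)` for `k ≤ d-2` and `T_{d-1} = (0, d-1, 0)`. -/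
def Tinit (d k : ℕ) : ℕ × List ℕ × ℕ :=
  if k = d - 1 then (0, [d - 1], 0) else (0, ([] : List ℕ), k)

/-- The Parikh vector of a word. -/
def parikh (d : ℕ) (w : List ℕ) : Fin d → ℕ := fun i => w.count (i : ℕ)

/-- The incidence matrix of `φ_d`. -/
def Mmat (d : ℕ) : Matrix (Fin d) (Fin d) ℕ := fun i j => (phiL d (j : ℕ)).count (i : ℕ)

/-- `r` is a return word to `w` in `u`. -/
def ReturnWord (u : ℕ → ℕ) (w r : List ℕ) : Prop :=
  ∃ j ℓ : ℕ, j < ℓ ∧ OccursAt w u j ∧ OccursAt w u ℓ ∧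
    (∀ m, j < m → m < ℓ → ¬ OccursAt w u m) ∧
    r = (List.range (ℓ - j)).map fun t => u (j + t)

/-- `R` is a complete return word to `w` in `u`. -/
def CompleteReturn (u : ℕ → ℕ) (w R : List ℕ) : Prop :=
  ∃ r : List ℕ, ReturnWord u w r ∧ R = r ++ w

/-- The projection `π : i ↦ a bⁱ` to the binary alphabet (here `a = false`, `b = true`). -/
def piL (i : ℕ) : List Bool := false :: List.replicate i true

/-!
Call a function `F` on `ℕ` of uniform slope `μ` if `F j - F i = μ (j - i) + o(j - i) + O(1)`
uniformly in `i ≤ j`.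

The incidence matrix of a positive morphism contracts the oscillation of the ratio of two weights on
the letters, because every image contains the letter at which a weight is known. Hence the sums of a
weight along a fixed point of a primitive morphism have a uniform slope; in particular so do the
positions at which the blocks `σ (u m)` start in `σ(u)`.

A window of period `p` in `u` is mapped to a window of `σ(u)` whose period is the length of the
image of `p` letters. If every block `σ i` contains its first letter exactly once, then conversely a
periodic window of `σ(u)` desubstitutes, up to two blocks at its ends. By uniformity, lengths of
windows and of periods are scaled by the same factor up to a relative error tending to `0`, so the
exponents agree in the limit.
-/

open Finset

variable {B : Type*} {n : ℕ}

/-! ### Windows with a period -/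

/-- The sequence `u` has period `p` on the window `[i, j)`, that is, the word
`u i ⋯ u (j - 1)` has period `p`. -/
def HasPeriodOn (u : ℕ → A) (p i j : ℕ) : Prop := ∀ t, i ≤ t → t + p < j → u (t + p) = u t

lemma HasPeriodOn.mul_left {u : ℕ → A} {p i j : ℕ} (h : HasPeriodOn u p i j) (m : ℕ) :
    HasPeriodOn u (m * p) i j := by
  induction m with
  | zero => intro t _ _; simp
  | succ m ih =>
    intro t hi hj
    rw [Nat.succ_mul] at hj ⊢
    rw [← add_assoc, h _ (by omega) (by omega), ih t hi (by omega)]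

lemma occursAt_iff_getElem? {w : List A} {u : ℕ → A} {j : ℕ} :
    OccursAt w u j ↔ ∀ t < w.length, w[t]? = some (u (j + t)) := by
  rw [OccursAt, List.ext_getElem?_iff]
  refine forall_congr' fun t => ?_
  by_cases ht : t < w.length <;> simp [ht]

lemma getElem?_flatten_replicate {w : List A} {k t : ℕ} (ht : t < k * w.length) :
    (List.replicate k w).flatten[t]? = w[t % w.length]? := by
  induction k generalizing t with
  | zero => simp at ht
  | succ k ih =>
    rw [List.replicate_succ, List.flatten_cons]
    rcases lt_or_ge t w.length with h | h
    · rw [List.getElem?_append_left h, Nat.mod_eq_of_lt h]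
    · rw [Nat.succ_mul] at ht
      rw [List.getElem?_append_right h, ih (by omega), Nat.mod_eq_sub_mod h]

lemma occursAt_powPref_iff {w : List A} (hw : w ≠ []) {u : ℕ → A} {k j : ℕ} :
    OccursAt (powPref w k) u j ↔ ∀ t < k, w[t % w.length]? = some (u (j + t)) := by
  have hk : k ≤ k * w.length := Nat.le_mul_of_pos_right k (List.length_pos_iff.2 hw)
  have hlen : (powPref w k).length = k := by simpa [powPref] using hk
  rw [occursAt_iff_getElem?, hlen]
  refine forall₂_congr fun t ht => ?_
  rw [powPref, List.getElem?_take_of_lt ht, getElem?_flatten_replicate (ht.trans_le hk)]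

lemma mem_expSet_iff {u : ℕ → A} {x : ℝ} :
    x ∈ expSet u n ↔ ∃ p i j : ℕ, 0 < p ∧ n ≤ p ∧ i ≤ j ∧ HasPeriodOn u p i j ∧
      x = ((j : ℝ) - i) / p := by
  constructor
  · rintro ⟨w, k, hw, hn, ⟨i, hi⟩, rfl⟩
    rw [occursAt_powPref_iff hw] at hi
    refine ⟨w.length, i, i + k, List.length_pos_iff.2 hw, hn, by omega, fun t hit htk => ?_,
      by simp⟩
    obtain ⟨t, rfl⟩ := Nat.exists_eq_add_of_le hit
    have h := hi (t + w.length) (by omega)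
    rw [Nat.add_mod_right, hi t (by omega), ← add_assoc] at h
    exact (Option.some.inj h).symm
  · rintro ⟨p, i, j, hp, hn, hij, hper, rfl⟩
    have hw : (List.range p).map (fun t => u (i + t)) ≠ [] := by simpa using hp.ne'
    refine ⟨_, j - i, hw, by simpa using hn, ⟨i, (occursAt_powPref_iff hw).2 fun t ht => ?_⟩,
      by simp [Nat.cast_sub hij]⟩
    have hmod := hper.mul_left (t / p) (i + t % p) (by omega)
    rw [add_assoc, mul_comm, Nat.mod_add_div] at hmod
    simp [Nat.mod_lt t hp, hmod (by omega)]

lemma one_mem_expSet (u : ℕ → A) (n : ℕ) : (1 : ℝ) ∈ expSet u n :=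
  mem_expSet_iff.2 ⟨n + 1, 0, n + 1, n.succ_pos, n.le_succ, Nat.zero_le _,
    fun t _ ht => by omega, by
      rw [Nat.cast_zero, sub_zero, div_self (Nat.cast_ne_zero.2 n.succ_ne_zero)]⟩

/-! ### The asymptotic critical exponent as an infimum -/

/-- A repetition of period `p` is also a repetition of period `(n + 1) p ≥ n`, with an exponent
`n + 1` times smaller. -/
lemma bddAbove_expSet_zero {u : ℕ → A} (h : BddAbove (expSet u n)) : BddAbove (expSet u 0) := by
  obtain ⟨E, hE⟩ := h
  refine ⟨(n + 1) * E, fun x hx => ?_⟩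
  obtain ⟨p, i, j, hp, -, hij, hper, rfl⟩ := mem_expSet_iff.1 hx
  have hle := hE (mem_expSet_iff.2 ⟨(n + 1) * p, i, j, by positivity, by nlinarith, hij,
    hper.mul_left (n + 1), rfl⟩)
  push_cast at hle
  rwa [mul_comm ((n : ℝ) + 1) (p : ℝ), ← div_div, div_le_iff₀' (by positivity)] at hle

lemma sSup_coe_image_eq_top_iff {X : Set ℝ} :
    sSup ((fun x : ℝ => (x : EReal)) '' X) = ⊤ ↔ ¬ BddAbove X := by
  refine ⟨?_, fun h => sSup_eq_top.2 fun y hy => ?_⟩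
  · rintro h ⟨E, hE⟩
    have hle : sSup ((fun x : ℝ => (x : EReal)) '' X) ≤ E :=
      sSup_le (Set.forall_mem_image.2 fun x hx => EReal.coe_le_coe_iff.2 (hE hx))
    exact EReal.coe_ne_top E (top_le_iff.1 (h ▸ hle))
  · obtain ⟨r, hyr, -⟩ := EReal.lt_iff_exists_real_btwn.1 hy
    obtain ⟨x, hx, hrx⟩ := not_bddAbove_iff.1 h r
    exact ⟨x, Set.mem_image_of_mem _ hx, hyr.trans (EReal.coe_lt_coe_iff.2 hrx)⟩

lemma acritExp_eq_iInf (u : ℕ → A) :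
    acritExp u = ⨅ n : ℕ, sSup ((fun x : ℝ => (x : EReal)) '' expSet u n) := by
  rw [acritExp]
  split_ifs with h
  · rw [critExp, sSup_coe_image_eq_top_iff] at h
    exact (iInf_eq_top.2 fun n => sSup_coe_image_eq_top_iff.2 (mt bddAbove_expSet_zero h)).symm
  · rfl

lemma iInf_sSup_coe_image_le {X Y : ℕ → Set ℝ}
    (h : ∀ n, BddAbove (Y n) → ∀ ε > 0, ∃ N, ∀ x ∈ X N, ∃ y ∈ Y n, x ≤ y + ε) :
    (⨅ n : ℕ, sSup ((fun x : ℝ => (x : EReal)) '' X n)) ≤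
      ⨅ n : ℕ, sSup ((fun x : ℝ => (x : EReal)) '' Y n) := by
  refine le_iInf fun n => EReal.le_of_forall_lt_iff_le.1 fun z hz => ?_
  obtain ⟨r, hr, hrz⟩ := EReal.lt_iff_exists_real_btwn.1 hz
  have hYr : ∀ y ∈ Y n, y ≤ r := fun y hy =>
    EReal.coe_le_coe_iff.1 ((le_sSup (Set.mem_image_of_mem _ hy)).trans hr.le)
  obtain ⟨N, hN⟩ := h n ⟨r, hYr⟩ (z - r) (sub_pos.2 (EReal.coe_lt_coe_iff.1 hrz))
  refine (iInf_le _ N).trans (sSup_le (Set.forall_mem_image.2 fun x hx => ?_))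
  obtain ⟨y, hy, hxy⟩ := hN x hx
  exact EReal.coe_le_coe_iff.2 (by linarith [hYr y hy])

/-! ### Images of sequences under morphisms -/

/-- `v = σ(u)`: the image under the morphism `σ` of every prefix of `u` is a prefix of `v`. -/
def IsMorphicImage (σ : A → List B) (u : ℕ → A) (v : ℕ → B) : Prop :=
  ∀ m, OccursAt (((List.range m).map u).flatMap σ) v 0

/-- The position in `σ(u)` at which the block `σ (u m)` starts. -/
def cut (σ : A → List B) (u : ℕ → A) (m : ℕ) : ℕ := ∑ t ∈ range m, (σ (u t)).length

lemma exists_mem_Ico_succ {f : ℕ → ℕ} (hf : StrictMono f) (h0 : f 0 = 0) (x : ℕ) :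
    ∃ m, x ∈ Set.Ico (f m) (f (m + 1)) := by
  induction x with
  | zero => exact ⟨0, h0.le, h0.symm.trans_lt (hf (Nat.lt_succ_self 0))⟩
  | succ x ih =>
    obtain ⟨m, hmx, hxm⟩ := ih
    rcases (Nat.succ_le_of_lt hxm).lt_or_eq with h | h
    · exact ⟨m, by omega, h⟩
    · exact ⟨m + 1, h.ge, h.trans_lt (hf (Nat.lt_succ_self _))⟩

section Cut

variable {σ : A → List B} {u : ℕ → A}

lemma cut_zero : cut σ u 0 = 0 := sum_range_zero _

lemma cut_succ (m : ℕ) : cut σ u (m + 1) = cut σ u m + (σ (u m)).length := sum_range_succ _ _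

lemma cut_strictMono (hσ : ∀ t, σ (u t) ≠ []) : StrictMono (cut σ u) :=
  strictMono_nat_of_lt_succ fun m => by
    have := List.length_pos_iff.2 (hσ m)
    rw [cut_succ]; omega

lemma cut_add_le {D : ℕ} (hD : ∀ t, (σ (u t)).length ≤ D) (i k : ℕ) :
    cut σ u (i + k) ≤ cut σ u i + D * k := by
  induction k with
  | zero => simp
  | succ k ih =>
    rw [← add_assoc, cut_succ, Nat.mul_succ]
    have := hD (i + k)
    omega

lemma length_flatMap_range (m : ℕ) :
    (((List.range m).map u).flatMap σ).length = cut σ u m := by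
  induction m with
  | zero => simp [cut]
  | succ m ih => rw [List.range_succ, cut_succ, ← ih]; simp

end Cut

namespace IsMorphicImage

variable {σ : A → List B} {u : ℕ → A} {v : ℕ → B}

lemma getElem? (hv : IsMorphicImage σ u v) {m k : ℕ} (hk : k < (σ (u m)).length) :
    (σ (u m))[k]? = some (v (cut σ u m + k)) := by
  have h := occursAt_iff_getElem?.1 (hv (m + 1)) (cut σ u m + k)
    (by rw [length_flatMap_range, cut_succ]; omega)
  rwa [List.range_succ, List.map_append, List.flatMap_append,
    List.getElem?_append_right (by rw [length_flatMap_range]; omega), length_flatMap_range,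
    Nat.add_sub_cancel_left, zero_add, List.map_singleton, List.flatMap_singleton] at h

lemma exists_mem (hv : IsMorphicImage σ u v) (hσ : ∀ t, σ (u t) ≠ []) (x : ℕ) :
    ∃ m, v x ∈ σ (u m) := by
  obtain ⟨m, hmx, hxm⟩ := exists_mem_Ico_succ (cut_strictMono hσ) cut_zero x
  rw [cut_succ] at hxm
  have h := hv.getElem? (m := m) (k := x - cut σ u m) (by omega)
  rw [Nat.add_sub_cancel' hmx] at h
  exact ⟨m, List.mem_of_getElem? h⟩

lemma comp {C : Type*} {τ : B → List C} {w : ℕ → C} (hv : IsMorphicImage σ u v)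
    (hw : IsMorphicImage τ v w) : IsMorphicImage (fun i => (σ i).flatMap τ) u w := by
  intro m
  have hm := hv m
  simp only [OccursAt, zero_add] at hm
  rw [← List.flatMap_assoc, hm]
  exact hw _

end IsMorphicImage

/-- The `n`-th power of the morphism `φ`, on letters. -/
def morphismPow (φ : A → List A) : ℕ → A → List A
  | 0, i => [i]
  | n + 1, i => (morphismPow φ n i).flatMap φ

lemma IsMorphicImage.pow {φ : A → List A} {u : ℕ → A} (hu : IsMorphicImage φ u u) (n : ℕ) :
    IsMorphicImage (morphismPow φ n) u u := by
  induction n with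
  | zero => intro m; simp [morphismPow, OccursAt]
  | succ n ih => exact ih.comp hu

/-! ### Uniform slopes -/

/-- `F` decreases by at most a constant on every interval. -/
def HasBoundedDrop (F : ℕ → ℝ) : Prop := ∃ C, ∀ i j, i ≤ j → F i ≤ F j + C

/-- All increments of `F` over long intervals have slope close to `μ`, uniformly in the position
of the interval. -/
def HasUniformSlope (F : ℕ → ℝ) (μ : ℝ) : Prop :=
  ∀ ε > 0, ∃ C, ∀ i j : ℕ, i ≤ j → |F j - F i - μ * (j - i)| ≤ ε * (j - i) + C

lemma le_of_hasBoundedDrop {F : ℕ → ℝ} {a b : ℝ} (ha : HasBoundedDrop fun m => F m - a * m)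
    (hb : HasBoundedDrop fun m => b * m - F m) : a ≤ b := by
  obtain ⟨C₁, h₁⟩ := ha
  obtain ⟨C₂, h₂⟩ := hb
  by_contra! hlt
  obtain ⟨m, hm⟩ := exists_nat_gt ((C₁ + C₂) / (a - b))
  rw [div_lt_iff₀ (sub_pos.2 hlt)] at hm
  have e₁ := h₁ 0 m m.zero_le
  have e₂ := h₂ 0 m m.zero_le
  simp only [Nat.cast_zero] at e₁ e₂
  linarith

lemma exists_hasUniformSlope_of_bounds {F : ℕ → ℝ}
    (h : ∀ ε > 0, ∃ a b, b - a ≤ ε ∧ (HasBoundedDrop fun m => F m - a * m) ∧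
      HasBoundedDrop fun m => b * m - F m) : ∃ μ, HasUniformSlope F μ := by
  set S : Set ℝ := {a | HasBoundedDrop fun m => F m - a * m}
  refine ⟨sSup S, fun ε hε => ?_⟩
  obtain ⟨a, b, hab, ha, hb⟩ := h ε hε
  have hSb : b ∈ upperBounds S := fun a' ha' => le_of_hasBoundedDrop ha' hb
  have haμ : a ≤ sSup S := le_csSup ⟨b, hSb⟩ ha
  have hμb : sSup S ≤ b := csSup_le ⟨a, ha⟩ hSb
  obtain ⟨C₁, h₁⟩ := ha
  obtain ⟨C₂, h₂⟩ := hb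
  refine ⟨max C₁ C₂, fun i j hij => abs_le.2 ⟨?_, ?_⟩⟩
  all_goals
    have hij' : (0 : ℝ) ≤ j - i := sub_nonneg.2 (Nat.cast_le.2 hij)
    nlinarith [h₁ i j hij, h₂ i j hij, le_max_left C₁ C₂, le_max_right C₁ C₂]

lemma abs_div_sub_div_le {p k P K μ η C E : ℝ} (hp : 0 < p) (hpP : p ≤ P) (hk : 0 ≤ k)
    (hkP : k ≤ E * P) (hη : 0 ≤ η) (hC : 0 ≤ C) (hP : |P - μ * p| ≤ η * p + C)
    (hK : |K - μ * k| ≤ η * k + C) : |k / p - K / P| ≤ 2 * η * E + C * (E + 1) / p := by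
  have hP₀ : 0 < P := hp.trans_le hpP
  have hnum : |k * P - p * K| ≤ 2 * η * (k * p) + C * k + C * p :=
    calc |k * P - p * K| = |k * (P - μ * p) - p * (K - μ * k)| := by ring_nf
      _ ≤ k * |P - μ * p| + p * |K - μ * k| := by
        simpa only [abs_mul, abs_of_nonneg hk, abs_of_pos hp]
          using abs_sub (k * (P - μ * p)) (p * (K - μ * k))
      _ ≤ k * (η * p + C) + p * (η * k + C) := by gcongr
      _ = 2 * η * (k * p) + C * k + C * p := by ring
  rw [div_sub_div _ _ hp.ne' hP₀.ne', abs_div, abs_of_pos (mul_pos hp hP₀),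
    div_le_iff₀ (mul_pos hp hP₀)]
  calc |k * P - p * K| ≤ 2 * η * (k * p) + C * k + C * p := hnum
    _ ≤ 2 * η * (E * P * p) + C * (E * P) + C * P := by gcongr
    _ = (2 * η * E + C * (E + 1) / p) * (p * P) := by field_simp; ring

lemma HasUniformSlope.exists_ratio_close {F : ℕ → ℝ} {μ E D ε : ℝ} (hF : HasUniformSlope F μ)
    (hgrow : ∀ i j : ℕ, i ≤ j → (j : ℝ) - i ≤ F j - F i) (hE : 0 ≤ E) (hε : 0 < ε) :
    ∃ N : ℕ, ∀ q i j : ℕ, 0 < q → N ≤ q → i ≤ j → ∀ K, |K - (F j - F i)| ≤ D →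
      (j : ℝ) - i ≤ E * (F (i + q) - F i) →
      |((j : ℝ) - i) / q - K / (F (i + q) - F i)| ≤ ε := by
  set η : ℝ := ε / (4 * (E + 1)) with hη
  have hη₀ : 0 < η := by positivity
  obtain ⟨C, hC⟩ := hF η hη₀
  have hC₀ : 0 ≤ C := by simpa using hC 0 0 le_rfl
  obtain ⟨N, hN⟩ := exists_nat_ge ((C + D) * (E + 1) / (ε / 2))
  refine ⟨N, fun q i j hq hNq hij K hK hle => ?_⟩
  have hq' : (0 : ℝ) < q := Nat.cast_pos.2 hq
  have hD₀ : 0 ≤ D := (abs_nonneg _).trans hK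
  have hperiod : |F (i + q) - F i - μ * q| ≤ η * q + (C + D) := by
    have := hC i (i + q) (by omega)
    simp only [Nat.cast_add, add_sub_cancel_left] at this
    linarith
  have hwindow : |K - μ * ((j : ℝ) - i)| ≤ η * ((j : ℝ) - i) + (C + D) := by
    have := abs_sub_le K (F j - F i) (μ * ((j : ℝ) - i))
    linarith [hC i j hij]
  have hqF : (q : ℝ) ≤ F (i + q) - F i := by simpa using hgrow i (i + q) (by omega)
  have hslope : 2 * η * E ≤ ε / 2 := by
    rw [hη, mul_div_assoc', div_mul_eq_mul_div, div_le_iff₀ (by positivity)]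
    nlinarith
  have hconst : (C + D) * (E + 1) / q ≤ ε / 2 := by
    rw [div_le_iff₀ hq', ← div_le_iff₀' (half_pos hε)]
    exact hN.trans (Nat.cast_le.2 hNq)
  linarith [abs_div_sub_div_le hq' hqF (sub_nonneg.2 (Nat.cast_le.2 hij)) hle hη₀.le
    (add_nonneg hC₀ hD₀) hperiod hwindow]

/-! ### Weights along fixed points of positive morphisms -/

/-- The total weight of the first `m` letters of `u`. -/
def weightSum (g : A → ℝ) (u : ℕ → A) (m : ℕ) : ℝ := ∑ t ∈ range m, g (u t)

lemma weightSum_succ (g : A → ℝ) (u : ℕ → A) (m : ℕ) :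
    weightSum g u (m + 1) = weightSum g u m + g (u m) := sum_range_succ _ _

lemma abs_weightSum_add_sub_le {g : A → ℝ} {u : ℕ → A} {K : ℝ} (hK : ∀ t, |g (u t)| ≤ K)
    (i k : ℕ) : |weightSum g u (i + k) - weightSum g u i| ≤ K * k := by
  induction k with
  | zero => simp
  | succ k ih =>
    rw [← add_assoc, weightSum_succ, add_sub_right_comm, Nat.cast_succ, mul_add_one]
    exact (abs_add_le _ _).trans (add_le_add ih (hK _))

/-- The action of the incidence matrix of the morphism `φ` on weights: the new weight of a letter
is the total weight of its image. -/
def incidence (φ : A → List B) : (B → ℝ) →ₗ[ℝ] (A → ℝ) where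
  toFun g i := ((φ i).map g).sum
  map_add' _ _ := funext fun _ => List.sum_map_add
  map_smul' c g := funext fun i => List.sum_map_mul_left (φ i) g c

lemma incidence_apply (φ : A → List B) (g : B → ℝ) (i : A) :
    incidence φ g i = ((φ i).map g).sum := rfl

lemma incidence_le_mul {φ : A → List B} {g : B → ℝ} {x : ℝ} {M : ℕ} {i : A} (hx : 0 ≤ x)
    (hM : (φ i).length ≤ M) (hg : ∀ j ∈ φ i, g j ≤ x) : incidence φ g i ≤ M * x :=
  calc incidence φ g i ≤ (φ i).length * x := by
        simpa [incidence_apply] using List.sum_le_card_nsmul ((φ i).map g) x (by simpa using hg)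
    _ ≤ M * x := by gcongr

lemma weightSum_eq_sum_map (g : A → ℝ) (u : ℕ → A) (m : ℕ) :
    weightSum g u m = (((List.range m).map u).map g).sum := by
  rw [List.map_map]
  rfl

lemma sum_map_flatMap (φ : A → List B) (g : B → ℝ) (w : List A) :
    ((w.flatMap φ).map g).sum = (w.map (incidence φ g)).sum := by
  induction w with
  | nil => rfl
  | cons i w ih =>
    rw [List.flatMap_cons, List.map_append, List.sum_append, ih, List.map_cons, List.sum_cons,
      incidence_apply]

lemma IsMorphicImage.weightSum_cut {φ : A → List B} {u : ℕ → A} {v : ℕ → B}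
    (hv : IsMorphicImage φ u v) (g : B → ℝ) (m : ℕ) :
    weightSum g v (cut φ u m) = weightSum (incidence φ g) u m := by
  have hm := hv m
  simp only [OccursAt, length_flatMap_range, zero_add] at hm
  rw [weightSum_eq_sum_map, weightSum_eq_sum_map, ← sum_map_flatMap, hm]

lemma HasBoundedDrop.of_incidence {φ : A → List B} {u : ℕ → A} {v : ℕ → B} {g : B → ℝ} {K : ℝ}
    {M : ℕ} (hv : IsMorphicImage φ u v) (hφ : ∀ t, φ (u t) ≠ []) (hM : ∀ t, (φ (u t)).length ≤ M)
    (hK : ∀ t, |g (v t)| ≤ K) (h : HasBoundedDrop (weightSum (incidence φ g) u)) :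
    HasBoundedDrop (weightSum g v) := by
  obtain ⟨C, hC⟩ := h
  have hnear : ∀ x m, x ∈ Set.Ico (cut φ u m) (cut φ u (m + 1)) →
      |weightSum g v x - weightSum (incidence φ g) u m| ≤ K * M := by
    rintro x m ⟨hmx, hxm⟩
    obtain ⟨k, rfl⟩ := Nat.exists_eq_add_of_le hmx
    have hkM : k ≤ M := by
      rw [cut_succ] at hxm
      have := hM m
      omega
    rw [← hv.weightSum_cut]
    exact (abs_weightSum_add_sub_le hK _ _).trans
      (mul_le_mul_of_nonneg_left (Nat.cast_le.2 hkM) ((abs_nonneg _).trans (hK 0)))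
  refine ⟨C + 2 * (K * M), fun i j hij => ?_⟩
  have hmono := cut_strictMono hφ
  obtain ⟨m, hm⟩ := exists_mem_Ico_succ hmono cut_zero i
  obtain ⟨l, hl⟩ := exists_mem_Ico_succ hmono cut_zero j
  have hml : m ≤ l := Nat.lt_succ_iff.1 (hmono.lt_iff_lt.1 ((hm.1.trans hij).trans_lt hl.2))
  linarith [hC m l hml, abs_le.1 (hnear i m hm), abs_le.1 (hnear j l hl)]

/-- The morphism `φ` maps words over `s` to words over `s`, and the image of each letter of `s`
contains every letter of `s`. -/
def IsPositiveOn (φ : A → List A) (s : Set A) : Prop := ∀ i ∈ s, ∀ j, j ∈ φ i ↔ j ∈ s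

/-- Some power of the morphism `φ` is positive on `s`, that is, `φ` is primitive over the
alphabet `s`. -/
def IsPrimitiveOn (φ : A → List A) (s : Set A) : Prop := ∃ n, IsPositiveOn (morphismPow φ n) s

namespace IsPositiveOn

variable {φ : A → List A} {s : Set A} {f g L N : A → ℝ} {a b K : ℝ} {M : ℕ} {c i : A}

lemma finite (hφ : IsPositiveOn φ s) : s.Finite := by
  rcases s.eq_empty_or_nonempty with rfl | ⟨i, hi⟩
  · exact Set.finite_empty
  · exact (φ i).finite_toSet.subset fun j hj => (hφ i hi j).2 hj

lemma ne_nil (hφ : IsPositiveOn φ s) (hi : i ∈ s) : φ i ≠ [] :=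
  List.ne_nil_of_mem ((hφ i hi i).2 hi)

lemma le_incidence (hφ : IsPositiveOn φ s) (hg : ∀ j ∈ s, 0 ≤ g j) (hi : i ∈ s) (hc : c ∈ s) :
    g c ≤ incidence φ g i :=
  List.single_le_sum (List.forall_mem_map.2 fun j hj => hg j ((hφ i hi j).1 hj)) _
    (List.mem_map_of_mem ((hφ i hi c).2 hc))

/-- The image of `i` contains `c`, so it also sees the surplus `N c - a * L c`. -/
lemma add_mul_incidence_le (hφ : IsPositiveOn φ s) (ha : ∀ j ∈ s, a * L j ≤ N j) (hi : i ∈ s)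
    (hc : c ∈ s) (hL : 0 < L c) (hK : 0 < K) (hLK : incidence φ L i ≤ K * L c) :
    (a + (N c / L c - a) / K) * incidence φ L i ≤ incidence φ N i := by
  have hle : (N - a • L) c ≤ incidence φ (N - a • L) i :=
    hφ.le_incidence (fun j hj => by simpa using ha j hj) hi hc
  have hra : 0 ≤ N c / L c - a := sub_nonneg.2 ((le_div_iff₀ hL).2 (ha c hc))
  have hsurplus : (N c / L c - a) / K * incidence φ L i ≤ N c - a * L c :=
    calc (N c / L c - a) / K * incidence φ L i ≤ (N c / L c - a) / K * (K * L c) := by gcongr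
      _ = N c - a * L c := by field_simp
  simp only [map_sub, map_smul, Pi.sub_apply, Pi.smul_apply, smul_eq_mul] at hle
  linarith

lemma exists_tighter_bounds (hφ : IsPositiveOn φ s) (hc : c ∈ s) (hL : 0 < L c) (hK : 0 < K)
    (hLK : ∀ i ∈ s, incidence φ L i ≤ K * L c)
    (hN : ∀ i ∈ s, a * L i ≤ N i ∧ N i ≤ b * L i) :
    ∃ a' b', b' - a' = (1 - 1 / K) * (b - a) ∧
      ∀ i ∈ s, a' * incidence φ L i ≤ incidence φ N i ∧
        incidence φ N i ≤ b' * incidence φ L i := by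
  refine ⟨a + (N c / L c - a) / K, b - (b - N c / L c) / K, by ring, fun i hi =>
    ⟨hφ.add_mul_incidence_le (fun j hj => (hN j hj).1) hi hc hL hK (hLK i hi), ?_⟩⟩
  have h := hφ.add_mul_incidence_le (N := -N) (a := -b)
    (fun j hj => by simpa using (hN j hj).2) hi hc hL hK (hLK i hi)
  rw [map_neg, Pi.neg_apply, Pi.neg_apply] at h
  linear_combination h

lemma pow_incidence_one_pos (hφ : IsPositiveOn φ s) (n : ℕ) :
    ∀ i ∈ s, 0 < (incidence φ ^ n) 1 i := by
  induction n with
  | zero => simp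
  | succ n ih =>
    rw [pow_succ', Module.End.mul_apply]
    exact fun i hi => (ih i hi).trans_le (hφ.le_incidence (fun j hj => (ih j hj).le) hi hi)

lemma pow_incidence_one_le_mul (hφ : IsPositiveOn φ s) (hM : ∀ i ∈ s, (φ i).length ≤ M) (n : ℕ)
    (hi : i ∈ s) (hc : c ∈ s) : (incidence φ ^ n) 1 i ≤ M * (incidence φ ^ n) 1 c := by
  cases n with
  | zero =>
    have hM₁ : 1 ≤ M := (List.length_pos_iff.2 (hφ.ne_nil hi)).trans_le (hM i hi)
    simpa using hM₁
  | succ n =>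
    have hpos := (hφ.pow_incidence_one_pos (n + 1) c hc).le
    rw [pow_succ', Module.End.mul_apply] at hpos ⊢
    exact incidence_le_mul hpos (hM i hi) fun j hj => hφ.le_incidence
      (fun k hk => (hφ.pow_incidence_one_pos n k hk).le) hc ((hφ i hi j).1 hj)

lemma exists_bounds_pow_incidence (hφ : IsPositiveOn φ s) (hc : c ∈ s)
    (hM : ∀ i ∈ s, (φ i).length ≤ M) (hf : ∀ i ∈ s, |f i| ≤ K) (n : ℕ) :
    ∃ a b, b - a = (1 - 1 / (M * M : ℝ)) ^ n * (2 * K) ∧ ∀ i ∈ s,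
      a * (incidence φ ^ n) 1 i ≤ (incidence φ ^ n) f i ∧
        (incidence φ ^ n) f i ≤ b * (incidence φ ^ n) 1 i := by
  induction n with
  | zero => exact ⟨-K, K, by ring, fun i hi => by simpa using abs_le.1 (hf i hi)⟩
  | succ n ih =>
    obtain ⟨a, b, hab, hbounds⟩ := ih
    have hpos := hφ.pow_incidence_one_pos n
    have hM₀ : (0 : ℝ) < M :=
      Nat.cast_pos.2 ((List.length_pos_iff.2 (hφ.ne_nil hc)).trans_le (hM c hc))
    have hLK : ∀ i ∈ s, incidence φ ((incidence φ ^ n) 1) i ≤ M * M * (incidence φ ^ n) 1 c :=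
      fun i hi => mul_assoc (M : ℝ) M _ ▸ incidence_le_mul (mul_nonneg hM₀.le (hpos c hc).le)
        (hM i hi) fun j hj => hφ.pow_incidence_one_le_mul hM n ((hφ i hi j).1 hj) hc
    obtain ⟨a', b', hab', hbounds'⟩ :=
      hφ.exists_tighter_bounds hc (hpos c hc) (mul_pos hM₀ hM₀) hLK hbounds
    simp only [pow_succ' (incidence φ), Module.End.mul_apply]
    exact ⟨a', b', by rw [hab', hab, pow_succ', mul_assoc], hbounds'⟩

end IsPositiveOn

lemma exists_forall_mem_le {s : Set A} (hs : s.Finite) {α : Type*} [Preorder α] [IsDirectedOrder α]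
    [Nonempty α] (f : A → α) : ∃ K, ∀ i ∈ s, f i ≤ K :=
  (hs.image f).exists_le.imp fun _ hK _ hi => hK _ (Set.mem_image_of_mem f hi)

lemma hasBoundedDrop_weightSum_of_nonneg {g : A → ℝ} {u : ℕ → A} (hg : ∀ t, 0 ≤ g (u t)) :
    HasBoundedDrop (weightSum g u) :=
  ⟨0, fun _ _ hij => by
    rw [add_zero]
    exact monotone_nat_of_le_succ (fun m => by linarith [weightSum_succ g u m, hg m]) hij⟩

namespace IsPositiveOn

variable {φ : A → List A} {s : Set A} {u : ℕ → A}

lemma hasBoundedDrop_weightSum (hφ : IsPositiveOn φ s) (hus : ∀ t, u t ∈ s)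
    (hu : IsMorphicImage φ u u) {n : ℕ} {g : A → ℝ} (hg : ∀ i ∈ s, 0 ≤ (incidence φ ^ n) g i) :
    HasBoundedDrop (weightSum g u) := by
  induction n generalizing g with
  | zero => exact hasBoundedDrop_weightSum_of_nonneg fun t => hg _ (hus t)
  | succ n ih =>
    obtain ⟨M, hM⟩ := exists_forall_mem_le hφ.finite fun i => (φ i).length
    obtain ⟨K, hK⟩ := exists_forall_mem_le hφ.finite fun i => |g i|
    exact (ih (by rwa [pow_succ, Module.End.mul_apply] at hg)).of_incidence hu
      (fun t => hφ.ne_nil (hus t)) (fun t => hM _ (hus t)) fun t => hK _ (hus t)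

lemma exists_hasUniformSlope (hφ : IsPositiveOn φ s) (hus : ∀ t, u t ∈ s)
    (hu : IsMorphicImage φ u u) (f : A → ℝ) : ∃ μ, HasUniformSlope (weightSum f u) μ := by
  obtain ⟨M, hM⟩ := exists_forall_mem_le hφ.finite fun i => (φ i).length
  obtain ⟨K, hK⟩ := exists_forall_mem_le hφ.finite fun i => |f i|
  refine exists_hasUniformSlope_of_bounds fun ε hε => ?_
  have hM₁ : (1 : ℝ) ≤ M :=
    Nat.one_le_cast.2 ((List.length_pos_iff.2 (hφ.ne_nil (hus 0))).trans_le (hM _ (hus 0)))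
  have hMM : 1 ≤ (M * M : ℝ) := one_le_mul_of_one_le_of_one_le hM₁ hM₁
  have hlim : Filter.Tendsto (fun n => (1 - 1 / (M * M : ℝ)) ^ n * (2 * K)) Filter.atTop
      (nhds (0 * (2 * K))) :=
    (tendsto_pow_atTop_nhds_zero_of_lt_one (sub_nonneg.2 (div_le_one_of_le₀ hMM (by positivity)))
      (sub_lt_self _ (by positivity))).mul_const _
  rw [zero_mul] at hlim
  obtain ⟨n, hn⟩ := (hlim.eventually (gt_mem_nhds hε)).exists
  obtain ⟨a, b, hab, hbounds⟩ := hφ.exists_bounds_pow_incidence (hus 0) hM hK n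
  refine ⟨a, b, (hab.trans_lt hn).le, ?_, ?_⟩
  · convert hφ.hasBoundedDrop_weightSum hus hu (n := n) (g := f - a • 1)
      (fun i hi => by simpa using (hbounds i hi).1) using 2 with m
    simp [weightSum, mul_comm]
  · convert hφ.hasBoundedDrop_weightSum hus hu (n := n) (g := b • 1 - f)
      (fun i hi => by simpa using (hbounds i hi).2) using 2 with m
    simp [weightSum, mul_comm]

end IsPositiveOn

lemma IsPrimitiveOn.finite {φ : A → List A} {s : Set A} (hφ : IsPrimitiveOn φ s) : s.Finite :=
  hφ.elim fun _ hn => hn.finite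

lemma IsPrimitiveOn.exists_hasUniformSlope {φ : A → List A} {s : Set A} (hφ : IsPrimitiveOn φ s)
    {u : ℕ → A} (hus : ∀ t, u t ∈ s) (hu : IsMorphicImage φ u u) (f : A → ℝ) :
    ∃ μ, HasUniformSlope (weightSum f u) μ :=
  hφ.elim fun n hn => hn.exists_hasUniformSlope hus (hu.pow n) f

/-! ### Transfer of periods between a sequence and its image -/

section Transfer

variable {σ : A → List B} {u : ℕ → A} {v : ℕ → B} {b : B} {p P i j : ℕ}

lemma HasPeriodOn.cut_add (h : HasPeriodOn u p i j) (hP : cut σ u (i + p) = cut σ u i + P) {t : ℕ}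
    (hit : i ≤ t) (htj : t + p ≤ j) : cut σ u (t + p) = cut σ u t + P := by
  induction t, hit using Nat.le_induction with
  | base => exact hP
  | succ t hit ih =>
    rw [Nat.add_right_comm, cut_succ, cut_succ, ih (by omega), h t hit (by omega)]
    omega

lemma HasPeriodOn.image (h : HasPeriodOn u p i j) (hv : IsMorphicImage σ u v)
    (hσ : ∀ t, σ (u t) ≠ []) (hP : cut σ u (i + p) = cut σ u i + P) :
    HasPeriodOn v P (cut σ u i) (cut σ u j) := by
  intro x hix hxj
  have hmono := cut_strictMono hσ
  obtain ⟨t, htx, hxt⟩ := exists_mem_Ico_succ hmono cut_zero x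
  have hit : i ≤ t := Nat.lt_succ_iff.1 (hmono.lt_iff_lt.1 (hix.trans_lt hxt))
  have htj : t + p < j := by
    by_contra! hjt
    rcases le_total (i + p) j with hj | hj
    · have hcut := h.cut_add hP (t := j - p) (by omega) (by omega)
      rw [Nat.sub_add_cancel (by omega)] at hcut
      have := hmono.monotone (Nat.sub_le_iff_le_add.2 hjt)
      omega
    · have := hmono.monotone hj
      omega
  obtain ⟨k, rfl⟩ := Nat.exists_eq_add_of_le htx
  have hk : k < (σ (u t)).length := by rw [cut_succ] at hxt; omega
  have hshift := hv.getElem? (m := t + p) (k := k) (by rwa [h t hit htj])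
  rw [h t hit htj, hv.getElem? hk, h.cut_add hP hit htj.le, add_right_comm] at hshift
  exact (Option.some.inj hshift).symm

/-- The letter `b` is a marker of the blocks of `σ`: it occurs in every block `σ i`, at the first
position and nowhere else. -/
def IsMarkedBy (σ : A → List B) (b : B) : Prop := ∀ i k, (σ i)[k]? = some b ↔ k = 0

lemma IsMarkedBy.ne_nil (hσ : IsMarkedBy σ b) (i : A) : σ i ≠ [] :=
  fun h => by simpa [h] using (hσ i 0).2 rfl

lemma IsMarkedBy.apply_cut_add_iff (hσ : IsMarkedBy σ b) (hv : IsMorphicImage σ u v) {m k : ℕ}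
    (hk : k < (σ (u m)).length) : v (cut σ u m + k) = b ↔ k = 0 := by
  rw [← hσ (u m) k, hv.getElem? hk, Option.some_inj]

lemma IsMarkedBy.apply_eq_iff_mem_range_cut (hσ : IsMarkedBy σ b) (hv : IsMorphicImage σ u v)
    (x : ℕ) : v x = b ↔ x ∈ Set.range (cut σ u) := by
  obtain ⟨m, hmx, hxm⟩ := exists_mem_Ico_succ (cut_strictMono fun t => hσ.ne_nil (u t)) cut_zero x
  obtain ⟨k, rfl⟩ := Nat.exists_eq_add_of_le hmx
  rw [hσ.apply_cut_add_iff hv (by rw [cut_succ] at hxm; omega)]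
  refine ⟨fun hk => ⟨m, by omega⟩, ?_⟩
  rintro ⟨l, hl⟩
  have hmono := cut_strictMono (σ := σ) (u := u) fun t => hσ.ne_nil (u t)
  have hml := hmono.le_iff_le.1 (hmx.trans_eq hl.symm)
  have hlm := hmono.lt_iff_lt.1 (hl.trans_lt hxm)
  rw [show l = m by omega] at hl
  omega

/-- The next occurrence of the marker `b` shows where a block ends. -/
lemma IsMarkedBy.eq_of_block_eq (hσ : IsMarkedBy σ b) (hinj : Function.Injective σ)
    (hv : IsMorphicImage σ u v) {t r : ℕ}
    (h : ∀ k ≤ (σ (u r)).length, v (cut σ u r + k) = v (cut σ u t + k)) : u r = u t := by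
  have hcut : ∀ m, v (cut σ u m + (σ (u m)).length) = b := fun m =>
    (hσ.apply_eq_iff_mem_range_cut hv _).2 ⟨m + 1, cut_succ m⟩
  have hpos : ∀ m, 0 < (σ (u m)).length := fun m => List.length_pos_iff.2 (hσ.ne_nil _)
  have hlen : (σ (u r)).length = (σ (u t)).length := by
    refine le_antisymm ?_ ?_ <;> by_contra! hlt
    · exact (hpos t).ne' ((hσ.apply_cut_add_iff hv hlt).1 ((h _ hlt.le).trans (hcut t)))
    · exact (hpos r).ne' ((hσ.apply_cut_add_iff hv hlt).1 ((h _ le_rfl).symm.trans (hcut r)))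
  refine hinj (List.ext_getElem? fun k => ?_)
  rcases lt_or_ge k (σ (u r)).length with hk | hk
  · rw [hv.getElem? hk, hv.getElem? (hlen ▸ hk), h k hk.le]
  · rw [List.getElem?_eq_none hk, List.getElem?_eq_none (hlen ▸ hk)]

lemma HasPeriodOn.preimage (h : HasPeriodOn v P i j) (hσ : IsMarkedBy σ b)
    (hinj : Function.Injective σ) (hv : IsMorphicImage σ u v) {q m l : ℕ} (him : i ≤ cut σ u m)
    (hlj : cut σ u l < j) (hq : cut σ u (m + q) = cut σ u m + P) : HasPeriodOn u q m l := by
  have hmono := cut_strictMono (σ := σ) (u := u) fun t => hσ.ne_nil (u t)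
  have hletter : ∀ t, m ≤ t → t + q < l → cut σ u (t + q) = cut σ u t + P → u (t + q) = u t := by
    intro t hmt htl hcut
    refine hσ.eq_of_block_eq hinj hv fun k hk => ?_
    have hit := hmono.monotone hmt
    have htj := hmono.monotone (Nat.succ_le_of_lt htl)
    rw [cut_succ] at htj
    rw [hcut, add_right_comm]
    exact h _ (by omega) (by omega)
  have hcut : ∀ t, m ≤ t → t + q ≤ l → cut σ u (t + q) = cut σ u t + P := by
    intro t hmt
    induction t, hmt using Nat.le_induction with
    | base => exact fun _ => hq
    | succ t hmt ih =>
      intro htl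
      have ht := ih (by omega)
      rw [Nat.add_right_comm, cut_succ, cut_succ, ht, hletter t hmt (by omega) ht]
      omega
  exact fun t hmt htl => hletter t hmt htl (hcut t hmt htl.le)

lemma HasPeriodOn.exists_preimage (h : HasPeriodOn v P i j) (hσ : IsMarkedBy σ b)
    (hinj : Function.Injective σ) (hv : IsMorphicImage σ u v) {D : ℕ}
    (hD : ∀ t, (σ (u t)).length ≤ D) (hP : 0 < P) (hij : i + P + D < j) :
    ∃ q m l, 0 < q ∧ m ≤ l ∧ HasPeriodOn u q m l ∧ cut σ u (m + q) = cut σ u m + P ∧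
      |((j : ℝ) - i) - (cut σ u l - cut σ u m)| ≤ 2 * D := by
  have hmono := cut_strictMono (σ := σ) (u := u) fun t => hσ.ne_nil (u t)
  obtain ⟨m, hmi, him⟩ := exists_mem_Ico_succ hmono cut_zero i
  obtain ⟨l, hlj, hjl⟩ := exists_mem_Ico_succ hmono cut_zero (j - 1)
  have hDm := hD m
  have hDl := hD l
  have hcutm := cut_succ (σ := σ) (u := u) m
  rw [cut_succ l] at hjl
  have hmark : v (cut σ u (m + 1) + P) = b := by
    rw [h _ him.le (by omega)]
    exact (hσ.apply_eq_iff_mem_range_cut hv _).2 ⟨m + 1, rfl⟩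
  obtain ⟨m', hm'⟩ := (hσ.apply_eq_iff_mem_range_cut hv _).1 hmark
  have hmm' : cut σ u (m + 1) < cut σ u m' := by omega
  obtain ⟨q, rfl⟩ := Nat.exists_eq_add_of_lt (hmono.lt_iff_lt.1 hmm')
  rw [add_assoc _ q] at hm'
  have hml : m + 1 ≤ l := Nat.lt_succ_iff.1 (hmono.lt_iff_lt.1 (by rw [cut_succ l]; omega))
  refine ⟨q + 1, m + 1, l, q.succ_pos, hml, h.preimage hσ hinj hv him.le (by omega) hm', hm', ?_⟩
  have hlower : cut σ u l + i ≤ j + cut σ u (m + 1) := by omega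
  have hupper : j + cut σ u (m + 1) ≤ cut σ u l + i + 2 * D := by omega
  rify at hlower hupper
  exact abs_le.2 ⟨by linarith, by linarith⟩

end Transfer

/-! ### Invariance of the asymptotic critical exponent -/

section Invariance

variable {σ : A → List B} {u : ℕ → A} {v : ℕ → B} {b : B} {μ : ℝ}

lemma cast_cut (m : ℕ) : (cut σ u m : ℝ) = weightSum (fun i => ((σ i).length : ℝ)) u m :=
  Nat.cast_sum _ _

lemma sub_le_cut_sub_cut (hσ : ∀ t, σ (u t) ≠ []) {i j : ℕ} (hij : i ≤ j) :
    (j : ℝ) - i ≤ (cut σ u j : ℝ) - cut σ u i := by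
  obtain ⟨k, rfl⟩ := Nat.exists_eq_add_of_le' hij
  have h : (k : ℝ) + cut σ u i ≤ cut σ u (k + i) := mod_cast (cut_strictMono hσ).add_le_nat k i
  push_cast
  linarith

lemma exists_expSet_image_close (hv : IsMorphicImage σ u v) (hσ : ∀ t, σ (u t) ≠ [])
    (hμ : HasUniformSlope (fun m => (cut σ u m : ℝ)) μ) (hbdd : BddAbove (expSet v n))
    {ε : ℝ} (hε : 0 < ε) : ∃ N, ∀ x ∈ expSet u N, ∃ y ∈ expSet v n, x ≤ y + ε := by
  obtain ⟨E, hE⟩ := hbdd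
  have hE₀ : 0 ≤ E := zero_le_one.trans (hE (one_mem_expSet v n))
  obtain ⟨N, hN⟩ :=
    hμ.exists_ratio_close (D := 0) (fun _ _ => sub_le_cut_sub_cut hσ) hE₀ hε
  refine ⟨max N n, fun x hx => ?_⟩
  obtain ⟨p, i, j, hp, hNp, hij, hper, rfl⟩ := mem_expSet_iff.1 hx
  have hmono := cut_strictMono hσ
  have hpP := hmono.add_le_nat p i
  rw [add_comm p i] at hpP
  obtain ⟨P, hP⟩ := Nat.exists_eq_add_of_le (hmono.monotone (Nat.le_add_right i p))
  have hPcast : (cut σ u (i + p) : ℝ) - cut σ u i = P := by simp [hP]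
  have hP₀ : (0 : ℝ) < P := Nat.cast_pos.2 (by omega)
  have hmem : ((cut σ u j : ℝ) - cut σ u i) / P ∈ expSet v n :=
    mem_expSet_iff.2 ⟨P, _, _, by omega, by omega, hmono.monotone hij, hper.image hv hσ hP, rfl⟩
  refine ⟨_, hmem, ?_⟩
  have hclose := hN p i j hp (by omega) hij (cut σ u j - cut σ u i) (by simp) (by
    rw [hPcast]
    exact (sub_le_cut_sub_cut hσ hij).trans ((div_le_iff₀ hP₀).1 (hE hmem)))
  rw [hPcast] at hclose
  linarith [(abs_le.1 hclose).2]

lemma exists_expSet_preimage_close (hv : IsMorphicImage σ u v) (hσ : IsMarkedBy σ b)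
    (hinj : Function.Injective σ) {D : ℕ} (hD : ∀ t, (σ (u t)).length ≤ D)
    (hμ : HasUniformSlope (fun m => (cut σ u m : ℝ)) μ) (hbdd : BddAbove (expSet u n))
    {ε : ℝ} (hε : 0 < ε) : ∃ N, ∀ x ∈ expSet v N, ∃ y ∈ expSet u n, x ≤ y + ε := by
  obtain ⟨E, hE⟩ := hbdd
  have hE₁ : 1 ≤ E := hE (one_mem_expSet u n)
  have hne : ∀ t, σ (u t) ≠ [] := fun t => hσ.ne_nil _
  obtain ⟨N, hN⟩ := hμ.exists_ratio_close (D := 2 * D)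
    (fun _ _ => sub_le_cut_sub_cut hne) (zero_le_one.trans hE₁) hε
  obtain ⟨R, hR⟩ := exists_nat_ge (D / ε)
  refine ⟨max R (D * max N n), fun x hx => ?_⟩
  obtain ⟨P, i, j, hP, hNP, -, hper, rfl⟩ := mem_expSet_iff.1 hx
  have hP₀ : (0 : ℝ) < P := Nat.cast_pos.2 hP
  rcases le_or_gt j (i + P + D) with hshort | hlong
  · refine ⟨1, one_mem_expSet u n, ?_⟩
    have hDP : (D : ℝ) ≤ P * ε := (div_le_iff₀ hε).1
      (hR.trans (Nat.cast_le.2 ((le_max_left _ _).trans hNP)))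
    have hshort' : (j : ℝ) ≤ i + P + D := mod_cast hshort
    rw [div_le_iff₀ hP₀]
    linarith
  · obtain ⟨q, m, l, hq, hml, hqper, hcut, hends⟩ :=
      hper.exists_preimage hσ hinj hv hD hP hlong
    have hNq : max N n ≤ q := by
      have hPq := cut_add_le hD m q
      have hD₀ := (List.length_pos_iff.2 (hne 0)).trans_le (hD 0)
      have hNP' := (le_max_right _ _).trans hNP
      exact Nat.le_of_mul_le_mul_left (by omega) hD₀
    have hq₀ : (0 : ℝ) < q := Nat.cast_pos.2 hq
    have hmem : ((l : ℝ) - m) / q ∈ expSet u n :=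
      mem_expSet_iff.2 ⟨q, m, l, hq, by omega, hml, hqper, rfl⟩
    refine ⟨_, hmem, ?_⟩
    have hPcast : (cut σ u (m + q) : ℝ) - cut σ u m = P := by simp [hcut]
    have hqP : (q : ℝ) ≤ P := by
      simpa [hPcast] using sub_le_cut_sub_cut hne (Nat.le_add_right m q)
    have hclose := hN q m l hq (by omega) hml _ hends (by
      rw [hPcast]
      exact ((div_le_iff₀ hq₀).1 (hE hmem)).trans (by gcongr))
    rw [hPcast] at hclose
    linarith [(abs_le.1 hclose).1]

theorem acritExp_eq_of_hasUniformSlope (hv : IsMorphicImage σ u v) (hσ : IsMarkedBy σ b)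
    (hinj : Function.Injective σ) {D : ℕ} (hD : ∀ t, (σ (u t)).length ≤ D)
    (hμ : HasUniformSlope (fun m => (cut σ u m : ℝ)) μ) : acritExp v = acritExp u := by
  rw [acritExp_eq_iInf, acritExp_eq_iInf]
  exact le_antisymm
    (iInf_sSup_coe_image_le fun _ hbdd _ => exists_expSet_preimage_close hv hσ hinj hD hμ hbdd)
    (iInf_sSup_coe_image_le fun _ hbdd _ =>
      exists_expSet_image_close hv (fun _ => hσ.ne_nil _) hμ hbdd)

theorem statement5_general {φ : A → List A} {s : Set A} (hφ : IsPrimitiveOn φ s)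
    (hus : ∀ t, u t ∈ s) (hu : IsMorphicImage φ u u) (hσ : IsMarkedBy σ b)
    (hinj : Function.Injective σ) (hv : IsMorphicImage σ u v) : acritExp v = acritExp u := by
  obtain ⟨μ, hμ⟩ := hφ.exists_hasUniformSlope hus hu fun i => ((σ i).length : ℝ)
  obtain ⟨D, hD⟩ := exists_forall_mem_le hφ.finite fun i => (σ i).length
  refine acritExp_eq_of_hasUniformSlope hv hσ hinj (fun t => hD _ (hus t)) (μ := μ) ?_
  simpa only [cast_cut] using hμ

end Invariance

/-! ### The morphisms `φ_d` and `π` -/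

section Phi

variable {d i j : ℕ}

lemma zero_mem_phiL : 0 ∈ phiL d i := by
  rw [phiL]
  split_ifs <;> exact List.mem_cons_self

lemma succ_mem_phiL (hj : j + 1 < d) : j + 1 ∈ phiL d j := by
  simp [phiL, Nat.lt_sub_iff_add_lt.2 hj]

lemma lt_of_mem_phiL (hd : 0 < d) (hj : j ∈ phiL d i) : j < d := by
  rw [phiL] at hj
  split_ifs at hj <;> simp only [List.mem_cons, List.not_mem_nil, or_false] at hj <;> omega

lemma lt_of_mem_morphismPow_phiL (hd : 0 < d) (hi : i < d) (hj : j ∈ morphismPow (phiL d) n i) :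
    j < d := by
  cases n with
  | zero => exact (List.mem_singleton.1 hj).trans_lt hi
  | succ n =>
    obtain ⟨k, -, hjk⟩ := List.mem_flatMap.1 hj
    exact lt_of_mem_phiL hd hjk

lemma zero_mem_morphismPow_phiL (n : ℕ) : 0 ∈ morphismPow (phiL d) (n + 1) i := by
  induction n with
  | zero => exact List.mem_flatMap.2 ⟨i, List.mem_singleton_self i, zero_mem_phiL⟩
  | succ n ih => exact List.mem_flatMap.2 ⟨0, ih, zero_mem_phiL⟩

lemma mem_morphismPow_phiL (hj : j < d) (hjn : j < n) : j ∈ morphismPow (phiL d) n i := by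
  induction j generalizing n with
  | zero =>
    obtain ⟨n, rfl⟩ := Nat.exists_eq_add_one.2 hjn
    exact zero_mem_morphismPow_phiL n
  | succ j ih =>
    obtain ⟨n, rfl⟩ := Nat.exists_eq_add_one.2 (Nat.zero_lt_of_lt hjn)
    exact List.mem_flatMap.2 ⟨j, ih (by omega) (by omega), succ_mem_phiL hj⟩

lemma isPrimitiveOn_phiL (hd : 0 < d) : IsPrimitiveOn (phiL d) (Set.Iio d) :=
  ⟨d, fun _ hi _ => ⟨lt_of_mem_morphismPow_phiL hd hi, fun hj => mem_morphismPow_phiL hj hj⟩⟩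

lemma IsPhiFixed.isMorphicImage {u : ℕ → ℕ} (hu : IsPhiFixed d u) : IsMorphicImage (phiL d) u u :=
  hu.2

lemma IsPhiFixed.lt {u : ℕ → ℕ} (hu : IsPhiFixed d u) (hd : 0 < d) (t : ℕ) : u t < d :=
  let ⟨_, ht⟩ := hu.isMorphicImage.exists_mem (fun _ => List.ne_nil_of_mem zero_mem_phiL) t
  lt_of_mem_phiL hd ht

end Phi

lemma isMarkedBy_piL : IsMarkedBy piL false := by
  rintro i (_ | k)
  · simp [piL]
  · simp [piL, List.getElem?_replicate]

lemma piL_injective : Function.Injective piL := fun i j h => by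
  simpa [piL] using congrArg List.length h

/-- For `d ≥ 3`, the projection `π : i ↦ a bⁱ` preserves the asymptotic
critical exponent: `E*(π(u_d)) = E*(u_d)`. -/
theorem statement5 (d : ℕ) (hd : 3 ≤ d) (u : ℕ → ℕ) (hu : IsPhiFixed d u)
    (v : ℕ → Bool) (hv : ∀ m : ℕ, OccursAt (((List.range m).map u).flatMap piL) v 0) :
    acritExp v = acritExp u := by
  have hd₀ : 0 < d := by omega
  exact statement5_general (isPrimitiveOn_phiL hd₀) (hu.lt hd₀) hu.isMorphicImage isMarkedBy_piL
    piL_injective hv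
end RichRT
end

section
/- Let d ≥ 3 and let u_d be the fixed point of φ_d. Let i, j, k, l ∈ {0,…,d−1} be letters with i ≠ j, k ≠ l, and max{i,j} ≤ min{k,l}. Then no finite word w over {0,…,d−1} satisfies that both iwk and jwl belong to the language L(u_d). -/
/-!
Each image `φ(a)` is a `0` followed by one or two copies of the letter `g(a) = min (a + 1) (d - 1)`,
so a factor of `u` is cut into images of letters by its occurrences of `0`, and `φ` is injective.
Among any two consecutive letters of `u` exactly one is `0`, unless both are `d - 1`. If `iwk` and
`jwl` are factors as in the theorem, then `i, j < d - 1` and `k, l ≠ 0`, which forces `w` to begin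
and end with `0`. Hence `w = φ(w')0` for a unique shorter `w'`, and `iwk`, `jwl` come from factors
`i'w'k'`, `j'w'l'` with `i = g(i')` and likewise for `j`, `k`, `l`. The letters `i', j', k', l'`
satisfy the same inequalities, so infinite descent on `|w|` excludes such a pair.
-/

namespace RichRT

variable {A : Type*}

section Factors

variable {u : ℕ → A} {v w : List A}

lemma isFactorS_iff_exists_isInfix :
    IsFactorS w u ↔ ∃ n, w <:+: (List.range n).map u := by
  constructor
  · rintro ⟨j, hj⟩
    refine ⟨j + w.length, (List.range j).map u, [], ?_⟩
    rw [OccursAt] at hj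
    conv_lhs => rw [hj]
    simp [List.range_add, Function.comp_def]
  · rintro ⟨n, x, y, hxy⟩
    refine ⟨x.length, List.ext_getElem (by simp) fun t ht _ => ?_⟩
    have hlen := congrArg List.length hxy
    simp only [List.length_append, List.length_map, List.length_range] at hlen
    have hget := congrArg (·[x.length + t]?) hxy
    simpa [List.getElem?_append, ht, show x.length + t < n by omega] using hget

lemma IsFactorS.of_isInfix (hw : IsFactorS w u) (hvw : v <:+: w) : IsFactorS v u := by
  obtain ⟨n, hn⟩ := isFactorS_iff_exists_isInfix.mp hw
  exact isFactorS_iff_exists_isInfix.mpr ⟨n, hvw.trans hn⟩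

end Factors

section Morphism

variable {d : ℕ}

/-- The letter that follows the initial `0` in the image `φ_d(a)` of a letter `a`. It is repeated
when `a = d - 1`, so it is also the last letter of `φ_d(a)`. -/
def blockLetter (d a : ℕ) : ℕ := min (a + 1) (d - 1)

lemma blockLetter_ne_zero (hd : 2 ≤ d) (a : ℕ) : blockLetter d a ≠ 0 := by
  unfold blockLetter
  omega

lemma phiL_eq_zero_cons_replicate (d a : ℕ) :
    ∃ n, phiL d a = 0 :: List.replicate (n + 1) (blockLetter d a) := by
  unfold phiL blockLetter
  split_ifs with ha
  · exact ⟨0, by simp [show min (a + 1) (d - 1) = a + 1 by omega]⟩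
  · exact ⟨1, by simp [show min (a + 1) (d - 1) = d - 1 by omega, List.replicate]⟩

lemma getLast?_phiL (d a : ℕ) : (phiL d a).getLast? = some (blockLetter d a) := by
  obtain ⟨n, hn⟩ := phiL_eq_zero_cons_replicate d a
  rw [hn, List.replicate_succ', ← List.cons_append, List.getLast?_concat]

lemma phiW_cons (d a : ℕ) (w : List ℕ) : phiW d (a :: w) = phiL d a ++ phiW d w :=
  List.flatMap_cons

lemma phiW_append (d : ℕ) (v w : List ℕ) : phiW d (v ++ w) = phiW d v ++ phiW d w :=
  List.flatMap_append

lemma length_le_length_phiW (d : ℕ) (w : List ℕ) : w.length ≤ (phiW d w).length := by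
  induction w with
  | nil => simp
  | cons a w ih =>
    obtain ⟨n, hn⟩ := phiL_eq_zero_cons_replicate d a
    simp only [phiW_cons, hn, List.length_append, List.length_cons, List.length_replicate]
    omega

lemma phiW_eq_nil {w : List ℕ} : phiW d w = [] ↔ w = [] := by
  refine ⟨fun h => ?_, fun h => by rw [h]; rfl⟩
  simpa [h] using length_le_length_phiW d w

lemma lt_of_mem_phiW (hd : 0 < d) {a : ℕ} {w : List ℕ} (ha : a ∈ phiW d w) : a < d := by
  obtain ⟨b, -, hb⟩ := List.mem_flatMap.mp ha
  obtain ⟨n, hn⟩ := phiL_eq_zero_cons_replicate d b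
  rw [hn, List.mem_cons, List.mem_replicate, blockLetter] at hb
  omega

lemma eq_zero_of_mem_head?_phiW {a : ℕ} {w : List ℕ} (ha : a ∈ (phiW d w).head?) : a = 0 := by
  cases w with
  | nil => simp [phiW] at ha
  | cons b w =>
    obtain ⟨n, hn⟩ := phiL_eq_zero_cons_replicate d b
    simpa [phiW_cons, hn, eq_comm] using ha

lemma isChain_phiW (hd : 2 ≤ d) (w : List ℕ) :
    (phiW d w).IsChain fun a b => (a = 0 ↔ b ≠ 0) ∨ (a = d - 1 ∧ b = d - 1) := by
  induction w with
  | nil => exact List.isChain_nil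
  | cons a w ih =>
    rw [phiW_cons, List.isChain_append]
    refine ⟨?_, ih, fun x hx y hy => ?_⟩
    · unfold phiL
      split_ifs <;> simp [show d - 1 ≠ 0 by omega]
    · have hx : blockLetter d a = x := by simpa [getLast?_phiL] using hx
      have hy : y = 0 := eq_zero_of_mem_head?_phiW hy
      simp [← hx, hy, blockLetter_ne_zero hd]

lemma exists_of_phiW_eq_append_zero_cons (hd : 2 ≤ d) {v x y : List ℕ}
    (h : phiW d v = x ++ 0 :: y) :
    ∃ v₁ v₂, v = v₁ ++ v₂ ∧ phiW d v₁ = x ∧ phiW d v₂ = 0 :: y := by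
  induction v generalizing x with
  | nil => simp [phiW] at h
  | cons a v ih =>
    obtain ⟨n, hn⟩ := phiL_eq_zero_cons_replicate d a
    cases x with
    | nil => exact ⟨[], a :: v, rfl, rfl, h⟩
    | cons b x =>
      have hzero : 0 ∉ List.replicate (n + 1) (blockLetter d a) := by
        simp [(blockLetter_ne_zero hd a).symm]
      rw [phiW_cons, hn, List.cons_append, List.cons_append, List.cons.injEq] at h
      obtain ⟨rfl, h⟩ := h
      obtain ⟨x, rfl, hx⟩ | ⟨z, hz, hzy⟩ := List.append_eq_append_iff.mp h
      · obtain ⟨v₁, v₂, rfl, rfl, hv₂⟩ := ih hx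
        exact ⟨a :: v₁, v₂, rfl, by rw [phiW_cons, hn, List.cons_append], hv₂⟩
      · obtain ⟨rfl, hv⟩ | ⟨z, rfl, -⟩ := List.cons_eq_append_iff.mp hzy
        · exact ⟨[a], v, rfl, by simpa [phiW, hn] using hz, hv⟩
        · simp [hz] at hzero

lemma exists_of_phiW_eq_append_singleton {v x : List ℕ} {b : ℕ} (h : phiW d v = x ++ [b]) :
    ∃ v' a, v = v' ++ [a] ∧ b = blockLetter d a := by
  obtain rfl | ⟨v', a, rfl⟩ := v.eq_nil_or_concat'
  · simp [phiW] at h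
  · have hlast := congrArg List.getLast? h
    exact ⟨v', a, rfl, by simpa [phiW, getLast?_phiL, eq_comm] using hlast⟩

lemma exists_of_phiW_eq_zero_cons_cons {v y : List ℕ} {b : ℕ} (h : phiW d v = 0 :: b :: y) :
    ∃ a v', v = a :: v' ∧ b = blockLetter d a := by
  cases v with
  | nil => simp [phiW] at h
  | cons a v' =>
    obtain ⟨n, hn⟩ := phiL_eq_zero_cons_replicate d a
    simp only [phiW_cons, hn, List.replicate_succ, List.cons_append, List.cons.injEq] at h
    exact ⟨a, v', rfl, h.2.1.symm⟩

lemma exists_desubstitution_of_isInfix_phiW (hd : 2 ≤ d) {i k : ℕ} {v w : List ℕ}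
    (hw : i :: (w ++ [k]) <:+: phiW d v) (hhead : w.head? = some 0)
    (hlast : w.getLast? = some 0) :
    ∃ i' w' k', i' :: (w' ++ [k']) <:+: v ∧
      i = blockLetter d i' ∧ w = phiW d w' ++ [0] ∧ k = blockLetter d k' := by
  obtain ⟨x, y, hxy⟩ := hw
  obtain ⟨s, hs⟩ := List.head?_eq_some_iff.mp hhead
  obtain ⟨t, ht⟩ := List.getLast?_eq_some_iff.mp hlast
  have hcut : phiW d v = (x ++ [i]) ++ 0 :: (s ++ k :: y) := by simp [← hxy, hs]
  obtain ⟨v₁, v₂, rfl, hv₁, hv₂⟩ := exists_of_phiW_eq_append_zero_cons hd hcut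
  have hcut₂ : phiW d v₂ = t ++ 0 :: k :: y := by
    rw [hv₂, ← List.cons_append, ← hs, ht, List.append_assoc, List.singleton_append]
  obtain ⟨w', v₃, rfl, rfl, hv₃⟩ := exists_of_phiW_eq_append_zero_cons hd hcut₂
  obtain ⟨x', i', rfl, hi⟩ := exists_of_phiW_eq_append_singleton hv₁
  obtain ⟨k', y', rfl, hk⟩ := exists_of_phiW_eq_zero_cons_cons hv₃
  exact ⟨i', w', k', ⟨x', y', by simp⟩, hi, ht, hk⟩

lemma eq_of_phiL_append_phiW_eq (hd : 2 ≤ d) {a b : ℕ} (ha : a < d) (hb : b < d)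
    {v w : List ℕ} (h : phiL d a ++ phiW d v = phiL d b ++ phiW d w) : a = b := by
  have hhead : ∀ x y : List ℕ, phiW d x ≠ (d - 1) :: phiW d y := fun x y hxy => by
    have : d - 1 = 0 := eq_zero_of_mem_head?_phiW (d := d) (w := x) (by simp [hxy])
    omega
  unfold phiL at h
  split_ifs at h <;>
    simp only [List.cons_append, List.nil_append, List.cons.injEq, true_and] at h
  · omega
  · exact absurd h.2 (hhead v w)
  · exact absurd h.2.symm (hhead w v)
  · omega

lemma phiW_injOn (hd : 2 ≤ d) : Set.InjOn (phiW d) {w | ∀ a ∈ w, a < d} := by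
  intro v hv w hw h
  induction v generalizing w with
  | nil => exact (phiW_eq_nil.mp h.symm).symm
  | cons a v ih =>
    cases w with
    | nil => exact phiW_eq_nil.mp h
    | cons b w =>
      obtain ⟨ha, hv'⟩ := List.forall_mem_cons.mp hv
      obtain ⟨hb, hw'⟩ := List.forall_mem_cons.mp hw
      rw [phiW_cons, phiW_cons] at h
      obtain rfl := eq_of_phiL_append_phiW_eq hd ha hb h
      rw [ih hv' hw' (List.append_cancel_left h)]

end Morphism

section FixedPoint

variable {d : ℕ} {u : ℕ → ℕ} {w : List ℕ}

lemma IsPhiFixed.exists_isInfix_phiW (hu : IsPhiFixed d u) (hw : IsFactorS w u) :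
    ∃ v, IsFactorS v u ∧ w <:+: phiW d v := by
  obtain ⟨n, hn⟩ := isFactorS_iff_exists_isInfix.mp hw
  refine ⟨(List.range n).map u, isFactorS_iff_exists_isInfix.mpr ⟨n, List.infix_rfl⟩, ?_⟩
  have himage := hu.2 n
  have hle := length_le_length_phiW d ((List.range n).map u)
  simp only [OccursAt, zero_add, List.length_map, List.length_range] at himage hle
  rw [himage]
  refine hn.trans (List.IsPrefix.isInfix ?_)
  obtain ⟨m, hm⟩ := Nat.exists_eq_add_of_le hle
  simp [hm, List.range_add]

lemma IsPhiFixed.lt_of_mem (hd : 0 < d) (hu : IsPhiFixed d u) (hw : IsFactorS w u) {a : ℕ}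
    (ha : a ∈ w) : a < d := by
  obtain ⟨v, -, hv⟩ := hu.exists_isInfix_phiW hw
  exact lt_of_mem_phiW hd (hv.subset ha)

lemma IsPhiFixed.adjacent_letters_of_isInfix (hd : 2 ≤ d) (hu : IsPhiFixed d u)
    (hw : IsFactorS w u) {a b : ℕ} (hab : [a, b] <:+: w) :
    (a = 0 ↔ b ≠ 0) ∨ (a = d - 1 ∧ b = d - 1) := by
  obtain ⟨v, -, hv⟩ := hu.exists_isInfix_phiW hw
  simpa using (isChain_phiW hd v).infix (hab.trans hv)

lemma IsPhiFixed.exists_desubstitution (hd : 2 ≤ d) (hu : IsPhiFixed d u) {i k : ℕ}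
    (hw : IsFactorS (i :: (w ++ [k])) u) (hhead : w.head? = some 0)
    (hlast : w.getLast? = some 0) :
    ∃ i' w' k', IsFactorS (i' :: (w' ++ [k'])) u ∧
      i = blockLetter d i' ∧ w = phiW d w' ++ [0] ∧ k = blockLetter d k' := by
  obtain ⟨v, hv, hwv⟩ := hu.exists_isInfix_phiW hw
  obtain ⟨i', w', k', h, hrest⟩ := exists_desubstitution_of_isInfix_phiW hd hwv hhead hlast
  exact ⟨i', w', k', hv.of_isInfix h, hrest⟩

lemma IsPhiFixed.exists_common_desubstitution (hd : 2 ≤ d) (hu : IsPhiFixed d u) {i j k l : ℕ}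
    (hik : IsFactorS (i :: (w ++ [k])) u) (hjl : IsFactorS (j :: (w ++ [l])) u)
    (hhead : w.head? = some 0) (hlast : w.getLast? = some 0) :
    ∃ i' j' w' k' l', IsFactorS (i' :: (w' ++ [k'])) u ∧ IsFactorS (j' :: (w' ++ [l'])) u ∧
      i = blockLetter d i' ∧ j = blockLetter d j' ∧ w = phiW d w' ++ [0] ∧
      k = blockLetter d k' ∧ l = blockLetter d l' := by
  obtain ⟨i', w', k', hik', hi, hw', hk⟩ := hu.exists_desubstitution hd hik hhead hlast
  obtain ⟨j', w'', l', hjl', hj, hw'', hl⟩ := hu.exists_desubstitution hd hjl hhead hlast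
  have hlt' : ∀ a ∈ w', a < d := fun a ha => hu.lt_of_mem (by omega) hik' (by simp [ha])
  have hlt'' : ∀ a ∈ w'', a < d := fun a ha => hu.lt_of_mem (by omega) hjl' (by simp [ha])
  obtain rfl : w' = w'' :=
    phiW_injOn hd hlt' hlt'' (List.append_cancel_right (hw'.symm.trans hw''))
  exact ⟨i', j', w', k', l', hik', hjl', hi, hj, hw', hk, hl⟩

lemma IsPhiFixed.head?_and_getLast?_eq_some_zero (hd : 2 ≤ d) (hu : IsPhiFixed d u)
    {i j k l : ℕ} (hik : IsFactorS (i :: (w ++ [k])) u) (hjl : IsFactorS (j :: (w ++ [l])) u)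
    (hi : i < d - 1) (hj : j < d - 1) (hk : k ≠ 0) (hl : l ≠ 0) (hij : i ≠ j) (hkl : k ≠ l) :
    w.head? = some 0 ∧ w.getLast? = some 0 := by
  have hw : w ≠ [] := by
    rintro rfl
    have hpair := hu.adjacent_letters_of_isInfix hd hik (a := i) (b := k) List.infix_rfl
    have hpair' := hu.adjacent_letters_of_isInfix hd hjl (a := j) (b := l) List.infix_rfl
    omega
  constructor
  · obtain ⟨c, s, rfl⟩ := List.exists_cons_of_ne_nil hw
    have hpair := hu.adjacent_letters_of_isInfix hd hik (a := i) (b := c) ⟨[], s ++ [k], by simp⟩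
    have hpair' := hu.adjacent_letters_of_isInfix hd hjl (a := j) (b := c) ⟨[], s ++ [l], by simp⟩
    rw [List.head?_cons, show c = 0 by omega]
  · obtain ⟨s, c, rfl⟩ := w.eq_nil_or_concat'.resolve_left hw
    have hpair := hu.adjacent_letters_of_isInfix hd hik (a := c) (b := k) ⟨i :: s, [], by simp⟩
    have hpair' := hu.adjacent_letters_of_isInfix hd hjl (a := c) (b := l) ⟨j :: s, [], by simp⟩
    rw [List.getLast?_concat, show c = 0 by omega]

end FixedPoint

/-- Let `d ≥ 3` and `i,j,k,l` be letters with `i ≠ j`, `k ≠ l` and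
`max{i,j} ≤ min{k,l}`. Then no word `w` satisfies that both `iwk` and `jwl` are factors
of the fixed point `u_d`. -/
theorem statement6 (d : ℕ) (hd : 3 ≤ d) (u : ℕ → ℕ) (hu : IsPhiFixed d u)
    (i j k l : ℕ) (hi : i < d) (hj : j < d) (hk : k < d) (hl : l < d)
    (hij : i ≠ j) (hkl : k ≠ l) (hm : max i j ≤ min k l) (w : List ℕ) :
    ¬ (IsFactorS (i :: (w ++ [k])) u ∧ IsFactorS (j :: (w ++ [l])) u) := by
  rintro ⟨hik, hjl⟩
  induction hn : w.length using Nat.strong_induction_on generalizing i j k l w with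
  | _ n ih =>
  have hd₂ : 2 ≤ d := by omega
  obtain ⟨hhead, hlast⟩ := hu.head?_and_getLast?_eq_some_zero hd₂ hik hjl
    (by omega) (by omega) (by omega) (by omega) hij hkl
  obtain ⟨i', j', w', k', l', hik', hjl', rfl, rfl, rfl, rfl, rfl⟩ :=
    hu.exists_common_desubstitution hd₂ hik hjl hhead hlast
  have hlen : w'.length < n := by
    rw [← hn, List.length_append]
    exact Nat.lt_succ_of_le (length_le_length_phiW d w')
  have hm' : max i' j' ≤ min k' l' := by
    unfold blockLetter at hm hkl
    omega
  have hlt : ∀ {v}, IsFactorS v u → ∀ a ∈ v, a < d := fun hv _ => hu.lt_of_mem (by omega) hv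
  exact ih _ hlen i' j' k' l' (hlt hik' _ (by simp)) (hlt hjl' _ (by simp))
    (hlt hik' _ (by simp)) (hlt hjl' _ (by simp)) (ne_of_apply_ne _ hij) (ne_of_apply_ne _ hkl)
    hm' w' hik' hjl' rfl
end RichRT
end

section
/- Let d ≥ 3 and let w be a bispecial factor of u_d having at least two distinct letters smaller than d−1 among its left extensions, and set i = min{a ∈ A : aw ∈ L(u_d)}. Then w = F_i, i ≤ d−3, the set of both-sided extensions of w is exactly {(d−1)w(d−1)} ∪ {iwk : i < k ≤ d−1} ∪ {kwi : i < k ≤ d−1}, and consequently the bilateral order of w equals 0. -/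
namespace RichRT

variable {A : Type*}

/-!
Every block `φ(a)` starts with `0` and contains no other `0`, so an occurrence in `u` of a word
delimited by `0`s can be desubstituted uniquely. With `s a = min (a + 1) (d - 1)`, the second and
the last letter of `φ(a)` are both `s a`; hence the pairs `(a, c)` such that `a (φ(v)0) c` is a
factor are the images under `s × s` of the pairs extending `v`.

Pairs of consecutive letters of `u` form a star with centre `0` and a loop at `d - 1`. So a
nonempty `w` with two left letters below `d - 1` starts with `0`, and `w = φ(v)r` with `r` a
nonempty prefix of a block. For `r = 0` induct on `v`: applying `s × s` moves the centre of the
star from `i` to `i + 1`. The other values of `r` are impossible: `r = 0(d-1)(d-1)` forces the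
next letter to be `0`, and `r = 0b` right special forces `b = d - 1`, so that `v` is followed by
`d - 2` or `d - 1`, neither of which is the centre of the star of `v`, leaving a single left letter
below `d - 1`.
-/

/-! ### Occurrences of words -/

section Occurrences

variable {u : ℕ → A} {v w : List A} {j : ℕ}

theorem occursAt_iff_getElem :
    OccursAt w u j ↔ ∀ (t : ℕ) (ht : t < w.length), u (j + t) = w[t] := by
  simp [OccursAt, List.ext_getElem_iff, eq_comm]

theorem occursAt_nil (u : ℕ → A) (j : ℕ) : OccursAt [] u j := rfl

theorem occursAt_append :
    OccursAt (v ++ w) u j ↔ OccursAt v u j ∧ OccursAt w u (j + v.length) := by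
  simp [OccursAt, List.range_add, List.append_eq_append_iff_of_size_eq_left, Function.comp_def,
    add_assoc]

theorem occursAt_singleton {a : A} : OccursAt [a] u j ↔ u j = a := by
  simp [OccursAt, eq_comm]

theorem occursAt_cons {a : A} : OccursAt (a :: w) u j ↔ u j = a ∧ OccursAt w u (j + 1) := by
  rw [← List.singleton_append, occursAt_append, occursAt_singleton, List.length_singleton]

theorem OccursAt.mem_range (hw : OccursAt w u j) : ∀ a ∈ w, a ∈ Set.range u := by
  rw [OccursAt] at hw
  rw [hw]
  simp

theorem OccursAt.of_prefix (hw : OccursAt w u j) (hvw : v <+: w) : OccursAt v u j := by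
  obtain ⟨t, rfl⟩ := hvw
  exact (occursAt_append.1 hw).1

theorem OccursAt.prefix_of_length_le (hv : OccursAt v u j) (hw : OccursAt w u j)
    (hvw : v.length ≤ w.length) : v <+: w := by
  rw [occursAt_iff_getElem] at hv hw
  exact List.prefix_iff_getElem.2 ⟨hvw, fun t ht => (hv t ht).symm.trans (hw t (by omega))⟩

theorem eq_of_append_singleton_prefix {z : A} (hz : z ∉ w) (h : v ++ [z] <+: w ++ [z]) :
    v = w := by
  rcases List.prefix_concat_iff.1 h with h | h
  · exact List.append_cancel_right h
  · exact absurd (h.subset (by simp)) hz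

theorem OccursAt.eq_of_append_singleton {z : A} (hv : OccursAt (v ++ [z]) u j)
    (hw : OccursAt (w ++ [z]) u j) (hzv : z ∉ v) (hzw : z ∉ w) : v = w := by
  rcases le_total (v ++ [z]).length (w ++ [z]).length with h | h
  · exact eq_of_append_singleton_prefix hzw (hv.prefix_of_length_le hw h)
  · exact (eq_of_append_singleton_prefix hzv (hw.prefix_of_length_le hv h)).symm

theorem recurrent_of_forall_prefix (h : ∀ n, ∃ p, 0 < p ∧ ∀ t < n, u (p + t) = u t) :
    Recurrent u := by
  rintro w ⟨j₀, hj₀⟩ N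
  induction N with
  | zero => exact ⟨j₀, Nat.zero_le _, hj₀⟩
  | succ N ih =>
    obtain ⟨j, hN, hj⟩ := ih
    obtain ⟨p, hp, hprefix⟩ := h (j + w.length)
    refine ⟨p + j, by omega, occursAt_iff_getElem.2 fun t ht => ?_⟩
    rw [add_assoc, hprefix (j + t) (by omega)]
    exact occursAt_iff_getElem.1 hj t ht

end Occurrences

/-! ### Extensions of words -/

section Extensions

/-- The left extensions of `w` in `u`, each recorded by its first letter. -/
def leftLetters (u : ℕ → A) (w : List A) : Set A := {a | IsFactorS (a :: w) u}

/-- The right extensions of `w` in `u`, each recorded by its last letter. -/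
def rightLetters (u : ℕ → A) (w : List A) : Set A := {c | IsFactorS (w ++ [c]) u}

/-- The both-sided extensions of `w` in `u`, each recorded by its first and last letters: the
edges of the extension graph of `w`. -/
def extPairs (u : ℕ → A) (w : List A) : Set (A × A) := {p | IsFactorS (p.1 :: (w ++ [p.2])) u}

theorem mem_extPairs_iff {u : ℕ → A} {w : List A} {a c : A} :
    (a, c) ∈ extPairs u w ↔ ∃ n, u n = a ∧ OccursAt w u (n + 1) ∧ u (n + 1 + w.length) = c := by
  simp [extPairs, IsFactorS, occursAt_cons, occursAt_append, occursAt_nil]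

theorem mem_leftLetters_iff {u : ℕ → A} {w : List A} {a : A} :
    a ∈ leftLetters u w ↔ ∃ c, (a, c) ∈ extPairs u w := by
  simp [mem_extPairs_iff, leftLetters, IsFactorS, occursAt_cons]

theorem mem_rightLetters_iff {u : ℕ → A} (hu : Recurrent u) {w : List A} {c : A} :
    c ∈ rightLetters u w ↔ ∃ a, (a, c) ∈ extPairs u w := by
  constructor
  · intro hc
    obtain ⟨j, hj, hwc⟩ := hu _ hc 1
    obtain ⟨n, rfl⟩ := Nat.exists_eq_add_of_le' hj
    exact ⟨u n, n, occursAt_cons.2 ⟨rfl, hwc⟩⟩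
  · rintro ⟨a, n, hn⟩
    exact ⟨n + 1, (occursAt_cons.1 hn).2⟩

theorem ncard_Lext (u : ℕ → ℕ) (w : List ℕ) : (Lext u w).ncard = (leftLetters u w).ncard := by
  have himage : Lext u w = (· :: w) '' leftLetters u w := by
    ext x
    constructor
    · rintro ⟨a, rfl, h⟩
      exact ⟨a, h, rfl⟩
    · rintro ⟨a, h, rfl⟩
      exact ⟨a, rfl, h⟩
  rw [himage, Set.ncard_image_of_injective _ fun _ _ h => (List.cons.inj h).1]

theorem ncard_Rext (u : ℕ → ℕ) (w : List ℕ) : (Rext u w).ncard = (rightLetters u w).ncard := by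
  have himage : Rext u w = (w ++ [·]) '' rightLetters u w := by
    ext x
    constructor
    · rintro ⟨a, rfl, h⟩
      exact ⟨a, h, rfl⟩
    · rintro ⟨a, h, rfl⟩
      exact ⟨a, rfl, h⟩
  rw [himage, Set.ncard_image_of_injective _ fun _ _ h => by simpa using h]

theorem Bext_eq_image (u : ℕ → ℕ) (w : List ℕ) :
    Bext u w = (fun p : ℕ × ℕ => p.1 :: (w ++ [p.2])) '' extPairs u w := by
  ext x
  constructor
  · rintro ⟨a, c, rfl, h⟩
    exact ⟨(a, c), h, rfl⟩
  · rintro ⟨⟨a, c⟩, h, rfl⟩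
    exact ⟨a, c, rfl, h⟩

theorem ncard_Bext (u : ℕ → ℕ) (w : List ℕ) : (Bext u w).ncard = (extPairs u w).ncard := by
  rw [Bext_eq_image, Set.ncard_image_of_injective _ fun _ _ h => by simpa [Prod.ext_iff] using h]

/-- The edges of a star with centre `i` and leaves `i + 1, …, ℓ`, in both orientations, together
with a loop at `ℓ`. It is the extension graph of the words `F_i`, with `ℓ = d - 1`. -/
def loopedStar (i ℓ : ℕ) : Finset (ℕ × ℕ) :=
  insert (ℓ, ℓ) ({i} ×ˢ Finset.Ioc i ℓ ∪ Finset.Ioc i ℓ ×ˢ {i})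

theorem mem_loopedStar {i ℓ a c : ℕ} :
    (a, c) ∈ loopedStar i ℓ ↔
      a = ℓ ∧ c = ℓ ∨ a = i ∧ i < c ∧ c ≤ ℓ ∨ c = i ∧ i < a ∧ a ≤ ℓ := by
  simp only [loopedStar, Finset.mem_insert, Prod.mk.injEq, Finset.mem_union, Finset.mem_product,
    Finset.mem_singleton, Finset.mem_Ioc]
  omega

theorem card_loopedStar {i ℓ : ℕ} (hi : i < ℓ) : (loopedStar i ℓ).card = 2 * (ℓ - i) + 1 := by
  have hloop : (ℓ, ℓ) ∉ {i} ×ˢ Finset.Ioc i ℓ ∪ Finset.Ioc i ℓ ×ˢ {i} := by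
    simp [hi.ne]
  have hdisj : Disjoint ({i} ×ˢ Finset.Ioc i ℓ) (Finset.Ioc i ℓ ×ˢ {i}) := by
    rw [Finset.disjoint_product]
    simp
  rw [loopedStar, Finset.card_insert_of_notMem hloop, Finset.card_union_of_disjoint hdisj]
  simp only [Finset.card_product, Finset.card_singleton, Nat.card_Ioc]
  ring

variable {u : ℕ → ℕ} {w : List ℕ} {i ℓ : ℕ}

theorem leftLetters_eq_Icc (hi : i < ℓ) (h : extPairs u w = loopedStar i ℓ) :
    leftLetters u w = Set.Icc i ℓ := by
  ext a
  simp only [mem_leftLetters_iff, h, Finset.mem_coe, mem_loopedStar, Set.mem_Icc]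
  constructor
  · omega
  · rintro ⟨hia, haℓ⟩
    rcases hia.eq_or_lt with rfl | hia
    · exact ⟨ℓ, by omega⟩
    · exact ⟨i, by omega⟩

theorem rightLetters_eq_Icc (hu : Recurrent u) (hi : i < ℓ)
    (h : extPairs u w = loopedStar i ℓ) : rightLetters u w = Set.Icc i ℓ := by
  ext c
  simp only [mem_rightLetters_iff hu, h, Finset.mem_coe, mem_loopedStar, Set.mem_Icc]
  constructor
  · omega
  · rintro ⟨hic, hcℓ⟩
    rcases hic.eq_or_lt with rfl | hic
    · exact ⟨ℓ, by omega⟩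
    · exact ⟨i, by omega⟩

theorem bord_eq_zero_of_extPairs_eq_loopedStar (hu : Recurrent u) (hi : i < ℓ)
    (h : extPairs u w = loopedStar i ℓ) : bord u w = 0 := by
  rw [bord, ncard_Bext, ncard_Lext, ncard_Rext, leftLetters_eq_Icc hi h,
    rightLetters_eq_Icc hu hi h, h, Set.ncard_coe_finset, card_loopedStar hi,
    ← Finset.coe_Icc, Set.ncard_coe_finset, Nat.card_Icc]
  omega

theorem Bext_eq_of_extPairs_eq_loopedStar (h : extPairs u w = loopedStar i ℓ) :
    Bext u w = {x | x = ℓ :: (w ++ [ℓ]) ∨ (∃ k, i < k ∧ k ≤ ℓ ∧ x = i :: (w ++ [k])) ∨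
      ∃ k, i < k ∧ k ≤ ℓ ∧ x = k :: (w ++ [i])} := by
  ext x
  simp only [Bext_eq_image, h, Set.mem_image, Finset.mem_coe, Prod.exists, mem_loopedStar]
  constructor
  · rintro ⟨a, c, ⟨rfl, rfl⟩ | ⟨rfl, hc⟩ | ⟨rfl, ha⟩, rfl⟩
    · exact Or.inl rfl
    · exact Or.inr (Or.inl ⟨c, hc.1, hc.2, rfl⟩)
    · exact Or.inr (Or.inr ⟨a, ha.1, ha.2, rfl⟩)
  · rintro (rfl | ⟨k, hik, hkℓ, rfl⟩ | ⟨k, hik, hkℓ, rfl⟩)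
    · exact ⟨ℓ, ℓ, Or.inl ⟨rfl, rfl⟩, rfl⟩
    · exact ⟨i, k, Or.inr (Or.inl ⟨rfl, hik, hkℓ⟩), rfl⟩
    · exact ⟨k, i, Or.inr (Or.inr ⟨rfl, hik, hkℓ⟩), rfl⟩

end Extensions

/-! ### Fixed points of morphisms -/

section Morphisms

/-- The sequence `u` is fixed by the morphism with letter images `σ`: the image of every prefix of
`u` is again a prefix of `u`. -/
def IsFixedBy (σ : A → List A) (u : ℕ → A) : Prop :=
  ∀ m, OccursAt (((List.range m).map u).flatMap σ) u 0

/-- The position in `u = σ(u)` at which the block `σ(u_m)` starts. -/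
def blockStart (σ : A → List A) (u : ℕ → A) (m : ℕ) : ℕ :=
  (((List.range m).map u).flatMap σ).length

/-- Every letter image under `σ` starts with the letter `z`, which occurs nowhere else in it. -/
def IsMarker (z : A) (σ : A → List A) : Prop :=
  ∀ a, ∃ t, σ a = z :: t ∧ z ∉ t

variable {σ : A → List A} {u : ℕ → A} {v w : List A} {z : A} {m n : ℕ}

theorem blockStart_zero (σ : A → List A) (u : ℕ → A) : blockStart σ u 0 = 0 := rfl

theorem blockStart_succ (σ : A → List A) (u : ℕ → A) (m : ℕ) :
    blockStart σ u (m + 1) = blockStart σ u m + (σ (u m)).length := by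
  simp [blockStart, List.range_succ]

theorem blockStart_strictMono (hσ : ∀ a, σ a ≠ []) : StrictMono (blockStart σ u) :=
  strictMono_nat_of_lt_succ fun m => by
    rw [blockStart_succ]
    exact Nat.lt_add_of_pos_right (List.length_pos_of_ne_nil (hσ _))

theorem exists_add_one_eq_blockStart_succ (hσ : ∀ a, σ a ≠ []) (u : ℕ → A) (m : ℕ) :
    ∃ n, n + 1 = blockStart σ u (m + 1) :=
  Nat.exists_add_one_eq.2
    ((Nat.zero_le _).trans_lt (blockStart_strictMono hσ (Nat.lt_succ_self m)))

theorem exists_eq_blockStart_add (hσ : ∀ a, σ a ≠ []) (u : ℕ → A) (n : ℕ) :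
    ∃ m k, k < (σ (u m)).length ∧ n = blockStart σ u m + k := by
  induction n with
  | zero => exact ⟨0, 0, List.length_pos_of_ne_nil (hσ _), by rw [blockStart_zero]⟩
  | succ n ih =>
    obtain ⟨m, k, hk, rfl⟩ := ih
    by_cases hk' : k + 1 < (σ (u m)).length
    · exact ⟨m, k + 1, hk', by omega⟩
    · refine ⟨m + 1, 0, List.length_pos_of_ne_nil (hσ _), ?_⟩
      rw [blockStart_succ]
      omega

theorem blockStart_add_length (hv : OccursAt v u m) :
    blockStart σ u (m + v.length) = blockStart σ u m + (v.flatMap σ).length := by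
  rw [OccursAt] at hv
  conv_rhs => rw [hv]
  simp [blockStart, List.range_add, Function.comp_def]

namespace IsFixedBy

theorem occursAt_block (hu : IsFixedBy σ u) (m : ℕ) :
    OccursAt (σ (u m)) u (blockStart σ u m) := by
  have h := hu (m + 1)
  rw [List.range_succ, List.map_append, List.flatMap_append, occursAt_append, zero_add,
    List.map_singleton, List.flatMap_singleton] at h
  exact h.2

theorem apply_blockStart_add (hu : IsFixedBy σ u) (m : ℕ) {k : ℕ} (hk : k < (σ (u m)).length) :
    u (blockStart σ u m + k) = (σ (u m))[k] :=
  occursAt_iff_getElem.1 (hu.occursAt_block m) k hk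

theorem exists_mem_block (hu : IsFixedBy σ u) (hσ : ∀ a, σ a ≠ []) (n : ℕ) :
    ∃ m, u n ∈ σ (u m) := by
  obtain ⟨m, k, hk, rfl⟩ := exists_eq_blockStart_add hσ u n
  exact ⟨m, by rw [hu.apply_blockStart_add m hk]; exact List.getElem_mem hk⟩

theorem occursAt_flatMap (hu : IsFixedBy σ u) (hv : OccursAt v u m) :
    OccursAt (v.flatMap σ) u (blockStart σ u m) := by
  induction v generalizing m with
  | nil => exact occursAt_nil _ _
  | cons a v ih =>
    obtain ⟨rfl, hvm⟩ := occursAt_cons.1 hv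
    rw [List.flatMap_cons, occursAt_append, ← blockStart_succ]
    exact ⟨hu.occursAt_block m, ih hvm⟩

theorem recurrent (hu : IsFixedBy σ u) (hσ : ∀ a, σ a ≠ []) (hlong : 1 < (σ (u 0)).length)
    (hn : 0 < n) (hn0 : u n = u 0) : Recurrent u := by
  have hgrow : ∀ m, m + 1 < blockStart σ u (m + 1) := fun m => by
    induction m with
    | zero => simpa [blockStart_succ, blockStart_zero] using hlong
    | succ m ih => exact Nat.lt_of_le_of_lt ih (blockStart_strictMono hσ (Nat.lt_succ_self _))
  refine recurrent_of_forall_prefix fun m => ?_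
  suffices ∃ p, 0 < p ∧ ∀ t < m + 1, u (p + t) = u t by
    obtain ⟨p, hp, h⟩ := this
    exact ⟨p, hp, fun t ht => h t (by omega)⟩
  induction m with
  | zero => exact ⟨n, hn, by simpa using hn0⟩
  | succ m ih =>
    obtain ⟨p, hp, h⟩ := ih
    have hocc : OccursAt ((List.range (m + 1)).map u) u p :=
      occursAt_iff_getElem.2 fun t ht => by simpa using h t (by simpa using ht)
    have himage := occursAt_iff_getElem.1 (hu.occursAt_flatMap hocc)
    have hprefix := occursAt_iff_getElem.1 (hu (m + 1))
    refine ⟨blockStart σ u p, hp.trans_le (blockStart_strictMono hσ).le_apply, fun t ht => ?_⟩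
    have ht' : t < (((List.range (m + 1)).map u).flatMap σ).length := ht.trans_le (hgrow m)
    rw [himage t ht', ← hprefix t ht', zero_add]

theorem exists_desubstitution (hu : IsFixedBy σ u) (hσ : ∀ a, σ a ≠ []) (hw : w ≠ [])
    (hocc : OccursAt w u (blockStart σ u m)) :
    ∃ v r, OccursAt v u m ∧ w = v.flatMap σ ++ r ∧ r ≠ [] ∧
      r <+: σ (u (m + v.length)) := by
  induction hlen : w.length using Nat.strong_induction_on generalizing w m with
  | _ l ih =>
    subst hlen
    have hblock := hu.occursAt_block m
    rcases le_or_gt w.length (σ (u m)).length with hle | hlt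
    · exact ⟨[], w, occursAt_nil _ _, rfl, hw, hocc.prefix_of_length_le hblock hle⟩
    · obtain ⟨w', rfl⟩ := hblock.prefix_of_length_le hocc hlt.le
      rw [occursAt_append, ← blockStart_succ] at hocc
      have hpos := List.length_pos_of_ne_nil (hσ (u m))
      rw [List.length_append] at hlt
      obtain ⟨v, r, hv, rfl, hr, hrv⟩ := ih w'.length (by rw [List.length_append]; omega)
        (List.ne_nil_of_length_pos (by omega)) hocc.2 rfl
      refine ⟨u m :: v, r, occursAt_cons.2 ⟨rfl, hv⟩, by simp, hr, ?_⟩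
      rwa [List.length_cons, add_comm v.length, ← add_assoc]

end IsFixedBy

theorem IsMarker.ne_nil (hz : IsMarker z σ) (a : A) : σ a ≠ [] := by
  obtain ⟨t, ht, -⟩ := hz a
  simp [ht]

namespace IsFixedBy

theorem apply_blockStart (hu : IsFixedBy σ u) (hz : IsMarker z σ) (m : ℕ) :
    u (blockStart σ u m) = z := by
  obtain ⟨t, ht, -⟩ := hz (u m)
  have h := hu.occursAt_block m
  rw [ht] at h
  exact (occursAt_cons.1 h).1

theorem exists_eq_blockStart (hu : IsFixedBy σ u) (hz : IsMarker z σ) (hn : u n = z) :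
    ∃ m, n = blockStart σ u m := by
  obtain ⟨m, k, hk, rfl⟩ := exists_eq_blockStart_add hz.ne_nil u n
  obtain ⟨t, ht, hzt⟩ := hz (u m)
  rw [hu.apply_blockStart_add m hk] at hn
  rcases k with _ | k
  · exact ⟨m, rfl⟩
  · simp only [ht, List.getElem_cons_succ] at hn
    exact absurd (hn ▸ List.getElem_mem _) hzt

theorem eq_block_of_occursAt (hu : IsFixedBy σ u) (hz : IsMarker z σ) {a : A}
    (h : OccursAt (σ a ++ [z]) u (blockStart σ u m)) : σ a = σ (u m) := by
  have hblock : OccursAt (σ (u m) ++ [z]) u (blockStart σ u m) := by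
    rw [occursAt_append, ← blockStart_succ, occursAt_singleton]
    exact ⟨hu.occursAt_block m, hu.apply_blockStart hz _⟩
  obtain ⟨s, hs, hzs⟩ := hz a
  obtain ⟨t, ht, hzt⟩ := hz (u m)
  rw [hs, List.cons_append, occursAt_cons] at h
  rw [ht, List.cons_append, occursAt_cons] at hblock
  rw [hs, ht, h.2.eq_of_append_singleton hblock.2 hzs hzt]

theorem exists_occursAt_of_flatMap (hu : IsFixedBy σ u) (hz : IsMarker z σ)
    (hinj : Set.InjOn σ (Set.range u)) (hv : ∀ a ∈ v, a ∈ Set.range u)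
    (h : OccursAt (v.flatMap σ ++ [z]) u n) : ∃ m, n = blockStart σ u m ∧ OccursAt v u m := by
  induction v generalizing n with
  | nil =>
    obtain ⟨m, hm⟩ := hu.exists_eq_blockStart hz (occursAt_singleton.1 h)
    exact ⟨m, hm, occursAt_nil _ _⟩
  | cons a v ih =>
    rw [List.forall_mem_cons] at hv
    rw [List.flatMap_cons, List.append_assoc, occursAt_append] at h
    obtain ⟨hfirst, hrest⟩ := h
    obtain ⟨m', hm', hvm'⟩ := ih hv.2 hrest
    have hn : u n = z := by
      obtain ⟨t, ht, -⟩ := hz a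
      rw [ht] at hfirst
      exact (occursAt_cons.1 hfirst).1
    obtain ⟨m, rfl⟩ := hu.exists_eq_blockStart hz hn
    have hblock : OccursAt (σ a ++ [z]) u (blockStart σ u m) := by
      rw [occursAt_append, hm', occursAt_singleton]
      exact ⟨hfirst, hu.apply_blockStart hz m'⟩
    have ha : a = u m := hinj hv.1 ⟨m, rfl⟩ (hu.eq_block_of_occursAt hz hblock)
    rw [ha, ← blockStart_succ] at hm'
    obtain rfl := (blockStart_strictMono hz.ne_nil).injective hm'
    exact ⟨m, rfl, occursAt_cons.2 ⟨ha.symm, hvm'⟩⟩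

theorem occursAt_flatMap_append_cons_iff (hu : IsFixedBy σ u) (hz : IsMarker z σ)
    (hinj : Set.InjOn σ (Set.range u)) (hv : ∀ a ∈ v, a ∈ Set.range u) {t : List A} :
    OccursAt (v.flatMap σ ++ z :: t) u n ↔ ∃ m, n = blockStart σ u m ∧ OccursAt v u m ∧
      OccursAt t u (blockStart σ u (m + v.length) + 1) := by
  constructor
  · intro h
    obtain ⟨m, rfl, hvm⟩ := hu.exists_occursAt_of_flatMap hz hinj hv
      (h.of_prefix ⟨t, by simp⟩)
    rw [occursAt_append, occursAt_cons, ← blockStart_add_length hvm] at h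
    exact ⟨m, rfl, hvm, h.2.2⟩
  · rintro ⟨m, rfl, hvm, ht⟩
    rw [occursAt_append, occursAt_cons, ← blockStart_add_length hvm]
    exact ⟨hu.occursAt_flatMap hvm, hu.apply_blockStart hz _, ht⟩

end IsFixedBy

end Morphisms

/-! ### The morphism `φ_d` -/

section Phi

/-- The letter `s a = min (a + 1) (d - 1)`, which is both the second and the last letter
of `φ_d(a)`. -/
def capSucc (d a : ℕ) : ℕ := min (a + 1) (d - 1)

variable {d : ℕ} {u : ℕ → ℕ} {v w t : List ℕ} {a b c i m : ℕ}

theorem phiL_of_lt (ha : a < d - 1) : phiL d a = [0, a + 1] := if_pos ha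

theorem phiL_of_le (ha : d - 1 ≤ a) : phiL d a = [0, d - 1, d - 1] := if_neg ha.not_gt

theorem phiL_ne_nil (d a : ℕ) : phiL d a ≠ [] := by
  unfold phiL
  split_ifs <;> simp

theorem isMarker_phiL (hd : 2 ≤ d) : IsMarker 0 (phiL d) := by
  intro a
  rcases lt_or_ge a (d - 1) with ha | ha
  · exact ⟨[a + 1], phiL_of_lt ha, by simp⟩
  · have hlast : 0 ≠ d - 1 := by omega
    exact ⟨[d - 1, d - 1], phiL_of_le ha, by simp [hlast]⟩

theorem le_of_mem_phiL (h : c ∈ phiL d a) : c ≤ d - 1 := by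
  rcases lt_or_ge a (d - 1) with ha | ha
  · rw [phiL_of_lt ha] at h
    simp only [List.mem_cons, List.not_mem_nil, or_false] at h
    omega
  · rw [phiL_of_le ha] at h
    simp only [List.mem_cons, List.not_mem_nil, or_false] at h
    omega

theorem phiL_injOn (d : ℕ) : Set.InjOn (phiL d) (Set.Iic (d - 1)) := by
  intro a ha b hb h
  simp only [Set.mem_Iic] at ha hb
  unfold phiL at h
  split_ifs at h <;>
    simp only [List.cons.injEq, List.nil_eq, List.cons_ne_nil, and_true, and_false, true_and]
      at h <;> omega

theorem length_lt_length_phiW_append (d : ℕ) (v : List ℕ) (ht : t ≠ []) :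
    v.length < (phiW d v ++ t).length := by
  have hle : v.length ≤ (phiW d v).length := by
    induction v with
    | nil => simp
    | cons a v ih =>
      have hpos := List.length_pos_of_ne_nil (phiL_ne_nil d a)
      rw [phiW, List.flatMap_cons, List.length_append, List.length_cons, ← phiW]
      omega
  have hpos := List.length_pos_of_ne_nil ht
  rw [List.length_append]
  omega

theorem exists_eq_of_prefix_phiL (ht : t ≠ []) (h : t <+: phiL d a) :
    t = [0] ∨ (∃ b, t = [0, b]) ∨ t = [0, d - 1, d - 1] := by
  obtain ⟨t', ht'⟩ := h
  rcases lt_or_ge a (d - 1) with ha | ha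
  · rw [phiL_of_lt ha] at ht'
    rcases t with _ | ⟨x, _ | ⟨y, _ | ⟨z, t⟩⟩⟩ <;> simp_all
  · rw [phiL_of_le ha] at ht'
    rcases t with _ | ⟨x, _ | ⟨y, _ | ⟨z, _ | ⟨z', t⟩⟩⟩⟩ <;> simp_all

theorem blockStart_succ_of_lt (hm : u m < d - 1) :
    blockStart (phiL d) u (m + 1) = blockStart (phiL d) u m + 2 := by
  rw [blockStart_succ, phiL_of_lt hm]
  rfl

theorem blockStart_succ_of_le (hm : d - 1 ≤ u m) :
    blockStart (phiL d) u (m + 1) = blockStart (phiL d) u m + 3 := by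
  rw [blockStart_succ, phiL_of_le hm]
  rfl

namespace IsPhiFixed

theorem isFixedBy (hu : IsPhiFixed d u) : IsFixedBy (phiL d) u := hu.2

theorem apply_le (hu : IsPhiFixed d u) (n : ℕ) : u n ≤ d - 1 := by
  obtain ⟨m, hm⟩ := hu.isFixedBy.exists_mem_block (phiL_ne_nil d) n
  exact le_of_mem_phiL hm

theorem phiL_injOn_range (hu : IsPhiFixed d u) : Set.InjOn (phiL d) (Set.range u) :=
  (phiL_injOn d).mono (Set.range_subset_iff.2 hu.apply_le)

theorem apply_blockStart (hu : IsPhiFixed d u) (m : ℕ) : u (blockStart (phiL d) u m) = 0 := by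
  have h := hu.isFixedBy.occursAt_block m
  unfold phiL at h
  split_ifs at h <;> exact (occursAt_cons.1 h).1

theorem apply_blockStart_add_one (hu : IsPhiFixed d u) (m : ℕ) :
    u (blockStart (phiL d) u m + 1) = capSucc d (u m) := by
  rcases lt_or_ge (u m) (d - 1) with hm | hm
  · rw [hu.isFixedBy.apply_blockStart_add m (k := 1) (by simp [phiL_of_lt hm])]
    simp only [phiL_of_lt hm, List.getElem_cons_succ, List.getElem_cons_zero, capSucc]
    omega
  · rw [hu.isFixedBy.apply_blockStart_add m (k := 1) (by simp [phiL_of_le hm])]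
    simp only [phiL_of_le hm, List.getElem_cons_succ, List.getElem_cons_zero, capSucc]
    omega

theorem apply_blockStart_add_two_of_lt (hu : IsPhiFixed d u) (hm : u m < d - 1) :
    u (blockStart (phiL d) u m + 2) = 0 := by
  rw [← blockStart_succ_of_lt hm, hu.apply_blockStart]

theorem apply_blockStart_add_two_of_le (hu : IsPhiFixed d u) (hm : d - 1 ≤ u m) :
    u (blockStart (phiL d) u m + 2) = d - 1 := by
  rw [hu.isFixedBy.apply_blockStart_add m (k := 2) (by simp [phiL_of_le hm])]
  simp [phiL_of_le hm]

theorem apply_of_add_one_eq_blockStart_succ (hu : IsPhiFixed d u) {n : ℕ}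
    (hn : n + 1 = blockStart (phiL d) u (m + 1)) : u n = capSucc d (u m) := by
  rcases lt_or_ge (u m) (d - 1) with hm | hm
  · rw [blockStart_succ_of_lt hm] at hn
    rw [← hu.apply_blockStart_add_one]
    congr 1
    omega
  · rw [blockStart_succ_of_le hm] at hn
    obtain rfl : n = blockStart (phiL d) u m + 2 := by omega
    rw [hu.apply_blockStart_add_two_of_le hm]
    unfold capSucc
    omega

theorem recurrent (hu : IsPhiFixed d u) : Recurrent u := by
  have hlong : 1 < (phiL d (u 0)).length := by
    unfold phiL
    split_ifs <;> simp
  refine hu.isFixedBy.recurrent (phiL_ne_nil d) hlong (n := blockStart (phiL d) u 1) ?_ ?_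
  · exact blockStart_strictMono (phiL_ne_nil d) Nat.zero_lt_one
  · rw [hu.apply_blockStart, hu.1]

theorem exists_apply_eq (hu : IsPhiFixed d u) (hc : c ≤ d - 1) : ∃ m, u m = c := by
  induction c with
  | zero => exact ⟨0, hu.1⟩
  | succ c ih =>
    obtain ⟨m, hm⟩ := ih (by omega)
    refine ⟨blockStart (phiL d) u m + 1, ?_⟩
    rw [hu.apply_blockStart_add_one, hm, capSucc]
    omega

end IsPhiFixed

theorem image_capSucc_loopedStar (hi : i + 1 < d - 1) :
    Prod.map (capSucc d) (capSucc d) '' (loopedStar i (d - 1) : Set (ℕ × ℕ)) =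
      loopedStar (i + 1) (d - 1) := by
  ext ⟨a, c⟩
  simp only [Set.mem_image, Finset.mem_coe, Prod.exists, Prod.map_apply, Prod.mk.injEq,
    mem_loopedStar, capSucc]
  constructor
  · rintro ⟨x, y, h, rfl, rfl⟩
    omega
  · rintro (⟨rfl, rfl⟩ | ⟨rfl, hc⟩ | ⟨rfl, ha⟩)
    · exact ⟨d - 1, d - 1, by omega⟩
    · exact ⟨i, c - 1, by omega⟩
    · exact ⟨a - 1, i, by omega⟩

namespace IsPhiFixed

theorem mem_loopedStar_zero (hu : IsPhiFixed d u) (n : ℕ) :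
    (u n, u (n + 1)) ∈ loopedStar 0 (d - 1) := by
  obtain ⟨m, k, hk, rfl⟩ := exists_eq_blockStart_add (phiL_ne_nil d) u n
  have hfirst := hu.apply_blockStart m
  have hsecond := hu.apply_blockStart_add_one m
  have hnext := hu.apply_blockStart (m + 1)
  rw [mem_loopedStar]
  unfold capSucc at hsecond
  rcases lt_or_ge (u m) (d - 1) with hm | hm
  · rw [blockStart_succ_of_lt hm] at hnext
    have hk2 : k < 2 := by simpa [phiL_of_lt hm] using hk
    interval_cases k <;> simp only [add_zero, add_assoc, Nat.reduceAdd] <;> omega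
  · rw [blockStart_succ_of_le hm] at hnext
    have hthird := hu.apply_blockStart_add_two_of_le hm
    have hk3 : k < 3 := by simpa [phiL_of_le hm] using hk
    interval_cases k <;> simp only [add_zero, add_assoc, Nat.reduceAdd] <;> omega

theorem extPairs_nil (hu : IsPhiFixed d u) :
    extPairs u [] = loopedStar 0 (d - 1) := by
  ext ⟨a, c⟩
  rw [mem_extPairs_iff, Finset.mem_coe]
  constructor
  · rintro ⟨n, rfl, -, rfl⟩
    exact hu.mem_loopedStar_zero n
  · rw [mem_loopedStar]
    rintro (⟨rfl, rfl⟩ | ⟨rfl, hc0, hc⟩ | ⟨rfl, ha0, ha⟩)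
    · obtain ⟨m, hm⟩ := hu.exists_apply_eq le_rfl
      refine ⟨blockStart (phiL d) u m + 1, ?_, occursAt_nil _ _,
        hu.apply_blockStart_add_two_of_le hm.ge⟩
      rw [hu.apply_blockStart_add_one, hm, capSucc]
      omega
    · obtain ⟨m, hm⟩ := hu.exists_apply_eq (c := c - 1) (by omega)
      refine ⟨blockStart (phiL d) u m, hu.apply_blockStart m, occursAt_nil _ _, ?_⟩
      rw [List.length_nil, add_zero, hu.apply_blockStart_add_one, hm, capSucc]
      omega
    · obtain ⟨m, hm⟩ := hu.exists_apply_eq (c := a - 1) (by omega)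
      obtain ⟨n, hn⟩ := exists_add_one_eq_blockStart_succ (phiL_ne_nil d) u m
      refine ⟨n, ?_, occursAt_nil _ _, ?_⟩
      · rw [hu.apply_of_add_one_eq_blockStart_succ hn, hm, capSucc]
        omega
      · rw [List.length_nil, add_zero, hn, hu.apply_blockStart]

theorem mem_extPairs_phiW_append_zero_cons_iff (hu : IsPhiFixed d u) (hd : 2 ≤ d)
    (hv : ∀ x ∈ v, x ∈ Set.range u) :
    (a, c) ∈ extPairs u (phiW d v ++ 0 :: t) ↔ ∃ m, capSucc d (u m) = a ∧ OccursAt v u (m + 1) ∧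
      OccursAt (t ++ [c]) u (blockStart (phiL d) u (m + 1 + v.length) + 1) := by
  have hsync := fun n => hu.isFixedBy.occursAt_flatMap_append_cons_iff (isMarker_phiL hd)
    hu.phiL_injOn_range hv (t := t ++ [c]) (n := n)
  simp only [extPairs, Set.mem_ofPred_eq, IsFactorS, occursAt_cons, List.append_assoc,
    List.cons_append, phiW, hsync]
  constructor
  · rintro ⟨n, rfl, _ | m, hm, hvm, ht⟩
    · simp [blockStart_zero] at hm
    · exact ⟨m, (hu.apply_of_add_one_eq_blockStart_succ hm).symm, hvm, ht⟩
  · rintro ⟨m, rfl, hvm, ht⟩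
    obtain ⟨n, hn⟩ := exists_add_one_eq_blockStart_succ (phiL_ne_nil d) u m
    exact ⟨n, hu.apply_of_add_one_eq_blockStart_succ hn, m + 1, hn, hvm, ht⟩

theorem extPairs_phiW_append_zero (hu : IsPhiFixed d u) (hd : 2 ≤ d)
    (hv : ∀ x ∈ v, x ∈ Set.range u) :
    extPairs u (phiW d v ++ [0]) = Prod.map (capSucc d) (capSucc d) '' extPairs u v := by
  ext ⟨a, c⟩
  simp only [hu.mem_extPairs_phiW_append_zero_cons_iff hd hv, List.nil_append,
    occursAt_singleton, hu.apply_blockStart_add_one, Set.mem_image, Prod.exists, Prod.map_apply,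
    Prod.mk.injEq, mem_extPairs_iff]
  constructor
  · rintro ⟨m, rfl, hvm, rfl⟩
    exact ⟨u m, _, ⟨m, rfl, hvm, rfl⟩, rfl, rfl⟩
  · rintro ⟨_, _, ⟨m, rfl, hvm, rfl⟩, rfl, rfl⟩
    exact ⟨m, rfl, hvm, rfl⟩

theorem exists_of_mem_extPairs_phiW_append_pair (hu : IsPhiFixed d u) (hd : 2 ≤ d)
    (hv : ∀ x ∈ v, x ∈ Set.range u) (h : (a, c) ∈ extPairs u (phiW d v ++ [0, b])) :
    ∃ x y, (x, y) ∈ extPairs u v ∧ capSucc d x = a ∧ capSucc d y = b ∧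
      (y < d - 1 ∧ c = 0 ∨ y = d - 1 ∧ c = d - 1) := by
  obtain ⟨m, ha, hvm, ht⟩ := (hu.mem_extPairs_phiW_append_zero_cons_iff hd hv).1 h
  simp only [List.cons_append, List.nil_append, occursAt_cons, hu.apply_blockStart_add_one] at ht
  obtain ⟨hb, hc, -⟩ := ht
  refine ⟨_, _, mem_extPairs_iff.2 ⟨m, rfl, hvm, rfl⟩, ha, hb, ?_⟩
  rw [add_assoc] at hc
  rcases (hu.apply_le (m + 1 + v.length)).lt_or_eq with hy | hy
  · exact Or.inl ⟨hy, by rw [← hc, hu.apply_blockStart_add_two_of_lt hy]⟩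
  · exact Or.inr ⟨hy, by rw [← hc, hu.apply_blockStart_add_two_of_le hy.ge]⟩

theorem eq_zero_of_mem_extPairs_phiW_append_last_block (hu : IsPhiFixed d u) (hd : 2 ≤ d)
    (hv : ∀ x ∈ v, x ∈ Set.range u)
    (h : (a, c) ∈ extPairs u (phiW d v ++ [0, d - 1, d - 1])) : c = 0 := by
  obtain ⟨m, -, -, ht⟩ := (hu.mem_extPairs_phiW_append_zero_cons_iff hd hv).1 h
  simp only [List.cons_append, List.nil_append, occursAt_cons, add_assoc, Nat.reduceAdd] at ht
  obtain ⟨-, hthird, hc, -⟩ := ht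
  have hlast : d - 1 ≤ u (m + (1 + v.length)) := by
    by_contra! hlt
    have hzero := hu.apply_blockStart_add_two_of_lt hlt
    omega
  rw [← hc, ← blockStart_succ_of_le hlast, hu.apply_blockStart]

end IsPhiFixed

/-- The word `w` is right special in `u` and has two distinct left extensions by letters smaller
than `d - 1`. -/
def IsSmallBispecial (d : ℕ) (u : ℕ → ℕ) (w : List ℕ) : Prop :=
  (leftLetters u w ∩ Set.Iio (d - 1)).Nontrivial ∧ (rightLetters u w).Nontrivial

namespace IsSmallBispecial

theorem two_le (hw : IsSmallBispecial d u w) : 2 ≤ d := by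
  obtain ⟨⟨a, ⟨-, had⟩, -⟩, -⟩ := hw
  rw [Set.mem_Iio] at had
  omega

theorem exists_eq_phiW_append (hw : IsSmallBispecial d u w) (hu : IsPhiFixed d u) (hne : w ≠ []) :
    ∃ v, (∀ x ∈ v, x ∈ Set.range u) ∧ v.length < w.length ∧
      (w = phiW d v ++ [0] ∨ (∃ b, w = phiW d v ++ [0, b]) ∨
        w = phiW d v ++ [0, d - 1, d - 1]) := by
  have hd := hw.two_le
  obtain ⟨⟨a, ⟨⟨n, ha⟩, had⟩, b, ⟨⟨n', hb⟩, hbd⟩, hab⟩, -⟩ := hw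
  obtain ⟨x, w, rfl⟩ := List.exists_cons_of_ne_nil hne
  simp only [occursAt_cons] at ha hb
  obtain ⟨rfl, hx, htail⟩ := ha
  -- A nonzero first letter of `w` could be preceded only by `0` or `d - 1`.
  have hx0 : x = 0 := by
    have hstar := mem_loopedStar.1 (hu.mem_loopedStar_zero n)
    have hstar' := mem_loopedStar.1 (hu.mem_loopedStar_zero n')
    simp only [Set.mem_Iio] at had hbd
    omega
  obtain ⟨m, hm⟩ := hu.isFixedBy.exists_eq_blockStart (isMarker_phiL hd) (hx.trans hx0)
  obtain ⟨v, r, hv, hw, hr, hprefix⟩ := hu.isFixedBy.exists_desubstitution (phiL_ne_nil d) hne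
    (hm ▸ occursAt_cons.2 ⟨hx, htail⟩)
  refine ⟨v, hv.mem_range, hw ▸ length_lt_length_phiW_append d v hr, ?_⟩
  rcases exists_eq_of_prefix_phiL hr hprefix with rfl | ⟨b, rfl⟩ | rfl
  · exact Or.inl hw
  · exact Or.inr (Or.inl ⟨b, hw⟩)
  · exact Or.inr (Or.inr hw)

theorem of_phiW_append_zero (hw : IsSmallBispecial d u (phiW d v ++ [0])) (hu : IsPhiFixed d u)
    (hv : ∀ x ∈ v, x ∈ Set.range u) : IsSmallBispecial d u v := by
  have hd := hw.two_le
  obtain ⟨⟨a, ⟨ha, had⟩, b, ⟨hb, hbd⟩, hab⟩, c, hc, c', hc', hcc⟩ := hw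
  simp only [mem_leftLetters_iff, mem_rightLetters_iff hu.recurrent,
    hu.extPairs_phiW_append_zero hd hv, Set.mem_image, Prod.exists, Prod.map_apply,
    Prod.mk.injEq, Set.mem_Iio] at ha hb hc hc' had hbd
  obtain ⟨-, x, y, hxy, rfl, -⟩ := ha
  obtain ⟨-, x', y', hxy', rfl, -⟩ := hb
  obtain ⟨-, p, q, hpq, -, rfl⟩ := hc
  obtain ⟨-, p', q', hpq', -, rfl⟩ := hc'
  refine ⟨⟨x, ⟨mem_leftLetters_iff.2 ⟨y, hxy⟩, ?_⟩, x', ⟨mem_leftLetters_iff.2 ⟨y', hxy'⟩, ?_⟩,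
      ne_of_apply_ne _ hab⟩, q, (mem_rightLetters_iff hu.recurrent).2 ⟨p, hpq⟩,
    q', (mem_rightLetters_iff hu.recurrent).2 ⟨p', hpq'⟩, ne_of_apply_ne _ hcc⟩
  all_goals
    simp only [capSucc, Set.mem_Iio] at *
    omega

theorem of_phiW_append_pair (hw : IsSmallBispecial d u (phiW d v ++ [0, b]))
    (hu : IsPhiFixed d u) (hv : ∀ x ∈ v, x ∈ Set.range u) :
    IsSmallBispecial d u v ∧ b = d - 1 := by
  have hd := hw.two_le
  obtain ⟨⟨a, ⟨ha, had⟩, a', ⟨ha', had'⟩, haa⟩, c, hc, c', hc', hcc⟩ := hw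
  obtain ⟨e, hae⟩ := mem_leftLetters_iff.1 ha
  obtain ⟨e', hae'⟩ := mem_leftLetters_iff.1 ha'
  obtain ⟨g, hgc⟩ := (mem_rightLetters_iff hu.recurrent).1 hc
  obtain ⟨g', hgc'⟩ := (mem_rightLetters_iff hu.recurrent).1 hc'
  obtain ⟨x, y, hxy, rfl, -⟩ := hu.exists_of_mem_extPairs_phiW_append_pair hd hv hae
  obtain ⟨x', y', hxy', rfl, -⟩ := hu.exists_of_mem_extPairs_phiW_append_pair hd hv hae'
  obtain ⟨p, q, hpq, -, hqb, hqc⟩ := hu.exists_of_mem_extPairs_phiW_append_pair hd hv hgc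
  obtain ⟨p', q', hpq', -, hqb', hqc'⟩ := hu.exists_of_mem_extPairs_phiW_append_pair hd hv hgc'
  refine ⟨⟨⟨x, ⟨mem_leftLetters_iff.2 ⟨y, hxy⟩, ?_⟩, x', ⟨mem_leftLetters_iff.2 ⟨y', hxy'⟩, ?_⟩,
      ne_of_apply_ne _ haa⟩, q, (mem_rightLetters_iff hu.recurrent).2 ⟨p, hpq⟩,
    q', (mem_rightLetters_iff hu.recurrent).2 ⟨p', hpq'⟩, ?_⟩, ?_⟩
  all_goals
    simp only [capSucc, Set.mem_Iio] at *
    omega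

theorem add_one_lt_of_extPairs_eq_loopedStar (hw : IsSmallBispecial d u w)
    (h : extPairs u w = loopedStar i (d - 1)) : i + 1 < d - 1 := by
  obtain ⟨⟨a, ⟨ha, had⟩, b, ⟨hb, hbd⟩, hab⟩, -⟩ := hw
  simp only [mem_leftLetters_iff, h, Finset.mem_coe, mem_loopedStar, Set.mem_Iio] at ha hb had hbd
  omega

theorem extPairs_ne_loopedStar_of_phiW_append_pair
    (hw : IsSmallBispecial d u (phiW d v ++ [0, d - 1])) (hu : IsPhiFixed d u)
    (hv : ∀ x ∈ v, x ∈ Set.range u) (hi : i + 1 < d - 1) :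
    extPairs u v ≠ loopedStar i (d - 1) := by
  intro hstar
  have hd := hw.two_le
  -- `v` is followed by `d - 2` or `d - 1`, so its only left letter below `d - 1` is `i`.
  have hleft : ∀ a ∈ leftLetters u (phiW d v ++ [0, d - 1]) ∩ Set.Iio (d - 1), a = i + 1 := by
    rintro a ⟨ha, had⟩
    obtain ⟨c, hac⟩ := mem_leftLetters_iff.1 ha
    obtain ⟨x, y, hxy, rfl, hy, -⟩ := hu.exists_of_mem_extPairs_phiW_append_pair hd hv hac
    rw [hstar, Finset.mem_coe, mem_loopedStar] at hxy
    simp only [capSucc, Set.mem_Iio] at *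
    omega
  obtain ⟨⟨a, ha, b, hb, hab⟩, -⟩ := hw
  exact hab ((hleft a ha).trans (hleft b hb).symm)

theorem not_phiW_append_last_block (hu : IsPhiFixed d u) (hv : ∀ x ∈ v, x ∈ Set.range u) :
    ¬ IsSmallBispecial d u (phiW d v ++ [0, d - 1, d - 1]) := by
  intro hw
  have hd := hw.two_le
  obtain ⟨-, c, hc, c', hc', hcc⟩ := hw
  obtain ⟨a, hac⟩ := (mem_rightLetters_iff hu.recurrent).1 hc
  obtain ⟨a', hac'⟩ := (mem_rightLetters_iff hu.recurrent).1 hc'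
  exact hcc ((hu.eq_zero_of_mem_extPairs_phiW_append_last_block hd hv hac).trans
    (hu.eq_zero_of_mem_extPairs_phiW_append_last_block hd hv hac').symm)

theorem exists_eq_Fword (hw : IsSmallBispecial d u w) (hu : IsPhiFixed d u) :
    ∃ i, i + 1 < d - 1 ∧ w = Fword d i ∧ extPairs u w = loopedStar i (d - 1) := by
  induction hlen : w.length using Nat.strong_induction_on generalizing w with
  | _ l ih =>
    subst hlen
    rcases eq_or_ne w [] with rfl | hne
    · have hstar := hu.extPairs_nil
      exact ⟨0, hw.add_one_lt_of_extPairs_eq_loopedStar hstar, rfl, hstar⟩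
    obtain ⟨v, hv, hlt, rfl | ⟨b, rfl⟩ | rfl⟩ := hw.exists_eq_phiW_append hu hne
    · obtain ⟨i, hi, hF, hstar⟩ := ih _ hlt (hw.of_phiW_append_zero hu hv) rfl
      have hstar' : extPairs u (phiW d v ++ [0]) = loopedStar (i + 1) (d - 1) := by
        rw [hu.extPairs_phiW_append_zero hw.two_le hv, hstar, image_capSucc_loopedStar hi]
      exact ⟨i + 1, hw.add_one_lt_of_extPairs_eq_loopedStar hstar', by rw [hF, Fword], hstar'⟩
    · obtain ⟨hvs, rfl⟩ := hw.of_phiW_append_pair hu hv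
      obtain ⟨i, hi, -, hstar⟩ := ih _ hlt hvs rfl
      exact absurd hstar (hw.extPairs_ne_loopedStar_of_phiW_append_pair hu hv hi)
    · exact absurd hw (not_phiW_append_last_block hu hv)

end IsSmallBispecial

theorem Bispecial.nontrivial_rightLetters (hw : Bispecial u w) :
    (rightLetters u w).Nontrivial :=
  (Set.one_lt_ncard_iff_nontrivial_and_finite.1 (ncard_Rext u w ▸ hw.2.2)).1

end Phi

/-- Let `d ≥ 3` and let `w` be a bispecial factor of `u_d` with at least two
distinct left-extension letters smaller than `d−1`, and let `i` be the minimal letter `a`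
with `aw ∈ L(u_d)`. Then `w = F_i`, `i ≤ d−3`, the both-sided extensions of `w` are exactly
`(d−1)w(d−1)`, `iwk` and `kwi` for `i < k ≤ d−1`, and the bilateral order of `w` is `0`. -/
theorem statement7 (d : ℕ) (hd : 3 ≤ d) (u : ℕ → ℕ) (hu : IsPhiFixed d u)
    (w : List ℕ) (hw : Bispecial u w)
    (htwo : ∃ a b : ℕ, a ≠ b ∧ a < d - 1 ∧ b < d - 1 ∧
      IsFactorS (a :: w) u ∧ IsFactorS (b :: w) u)
    (i : ℕ) (hiw : IsFactorS (i :: w) u)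
    (himin : ∀ a : ℕ, IsFactorS (a :: w) u → i ≤ a) :
    w = Fword d i ∧ i ≤ d - 3 ∧
    Bext u w = {x : List ℕ | x = (d - 1) :: (w ++ [d - 1]) ∨
      (∃ k : ℕ, i < k ∧ k ≤ d - 1 ∧ x = i :: (w ++ [k])) ∨
      (∃ k : ℕ, i < k ∧ k ≤ d - 1 ∧ x = k :: (w ++ [i]))} ∧
    bord u w = 0 := by
  have hsmall : IsSmallBispecial d u w := by
    obtain ⟨a, b, hab, had, hbd, ha, hb⟩ := htwo
    exact ⟨⟨a, ⟨ha, had⟩, b, ⟨hb, hbd⟩, hab⟩, hw.nontrivial_rightLetters⟩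
  obtain ⟨j, hj, hF, hstar⟩ := hsmall.exists_eq_Fword hu
  have hleft : leftLetters u w = Set.Icc j (d - 1) := leftLetters_eq_Icc (by omega) hstar
  obtain rfl : i = j := by
    have hjw : j ∈ leftLetters u w := hleft ▸ Set.left_mem_Icc.2 (by omega)
    have hji : i ∈ Set.Icc j (d - 1) := hleft ▸ hiw
    exact le_antisymm (himin j hjw) hji.1
  exact ⟨hF, by omega, Bext_eq_of_extPairs_eq_loopedStar hstar,
    bord_eq_zero_of_extPairs_eq_loopedStar hu.recurrent (by omega) hstar⟩

end RichRT
end
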